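/- arXiv:2108.13652 — 2 statements merged into one kernel-verified Lean document; each statement's English description precedes it below -/
import Mathlib

section
/- Let k be an algebraically closed field of characteristic 3 and let g = sl_3(k) be the Lie algebra of traceless 3×3 matrices over k. Then the sixth Chevalley–Eilenberg cohomology of g with trivial coefficients satisfies dim_k H^6(g, k) = 6, while H^7(g, k) = 0. -/
/-! Chevalley–Eilenberg cohomology of a Lie algebra with coefficients in a module. -/

section ChevalleyEilenberg

variable (k : Type*) [Field k]
variable (g : Type*) [LieRing g] [LieAlgebra k g]
variable (M : Type*) [AddCommGroup M] [Module k M] [LieRingModule g M] [LieModule k g M]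

/-- The Chevalley–Eilenberg differential, as a raw function from alternating `n`-cochains
to `(n+1)`-ary functions:
`dψ(l₀,…,lₙ) = Σ_{i<j} (−1)^{i+j} ψ(⁅lᵢ,lⱼ⁆, …, l̂ᵢ, …, l̂ⱼ, …) + Σ_i (−1)^i ⁅lᵢ, ψ(…, l̂ᵢ, …)⁆`
(indices written from 0; this is the paper's formula with 1-based indices shifted by one). -/
def ceD : ∀ {n : ℕ}, (g [⋀^Fin n]→ₗ[k] M) → ((Fin (n + 1) → g) → M)
  | 0, ψ, v => ⁅v 0, ψ ![]⁆
  | (n + 1), ψ, v =>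
      (∑ i : Fin (n + 2), ∑ j : Fin (n + 2),
        if h : i < j then
          ((-1 : ℤ) ^ (i.val + j.val)) •
            ψ (Fin.cons ⁅v i, v j⁆
              (fun l => v (i.succAbove
                ((j.pred (Fin.pos_iff_ne_zero.mp (lt_of_le_of_lt i.zero_le h))).succAbove l))))
        else 0)
      + ∑ i : Fin (n + 2), ((-1 : ℤ) ^ i.val) • ⁅v i, ψ (fun l => v (i.succAbove l))⁆

variable {k g M}

private lemma dite_add_zero {P : Prop} [Decidable P] {N : Type*} [AddZeroClass N]
    (A B : P → N) :
    (dite P (fun h => A h + B h) fun _ => 0) =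
      (dite P A fun _ => 0) + (dite P B fun _ => 0) := by
  split_ifs <;> simp

private lemma dite_smul_zero {P : Prop} [Decidable P] {N : Type*} [AddCommGroup N] [Module k N]
    (c : k) (A : P → N) :
    (dite P (fun h => c • A h) fun _ => 0) = c • dite P A fun _ => 0 := by
  split_ifs <;> simp

lemma ceD_add {n : ℕ} (ψ φ : g [⋀^Fin n]→ₗ[k] M) (v : Fin (n + 1) → g) :
    ceD k g M (ψ + φ) v = ceD k g M ψ v + ceD k g M φ v := by
  cases n with
  | zero => simp [ceD]
  | succ n =>
    simp only [ceD, AlternatingMap.add_apply, smul_add, lie_add, dite_add_zero,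
      Finset.sum_add_distrib]
    abel

lemma ceD_smul {n : ℕ} (c : k) (ψ : g [⋀^Fin n]→ₗ[k] M) (v : Fin (n + 1) → g) :
    ceD k g M (c • ψ) v = c • ceD k g M ψ v := by
  cases n with
  | zero => simp [ceD]
  | succ n =>
    simp only [ceD, AlternatingMap.smul_apply, lie_smul, smul_comm _ c, dite_smul_zero,
      ← Finset.smul_sum, smul_add]

lemma ceD_zero {n : ℕ} (v : Fin (n + 1) → g) :
    ceD k g M (0 : g [⋀^Fin n]→ₗ[k] M) v = 0 := by
  cases n with
  | zero => simp [ceD]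
  | succ n => simp [ceD]

variable (k g M)

/-- The space of Chevalley–Eilenberg `n`-cocycles `Zⁿ(g, M)`. -/
def ceZ (n : ℕ) : Submodule k (g [⋀^Fin n]→ₗ[k] M) where
  carrier := {ψ | ∀ v, ceD k g M ψ v = 0}
  add_mem' := by
    intro ψ φ hψ hφ v
    rw [ceD_add, hψ v, hφ v, add_zero]
  zero_mem' := fun v => ceD_zero v
  smul_mem' := by
    intro c ψ hψ v
    rw [ceD_smul, hψ v, smul_zero]

/-- The space of Chevalley–Eilenberg `n`-coboundaries `Bⁿ(g, M)`: in positive degree, the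
alternating `n`-cochains that agree (as functions) with `dφ` for some `(n-1)`-cochain `φ`. -/
def ceB : (n : ℕ) → Submodule k (g [⋀^Fin n]→ₗ[k] M)
  | 0 => ⊥
  | (n + 1) =>
      { carrier := {ψ | ∃ φ : g [⋀^Fin n]→ₗ[k] M, ∀ v, ψ v = ceD k g M φ v}
        add_mem' := by
          rintro ψ χ ⟨φ₁, h₁⟩ ⟨φ₂, h₂⟩
          exact ⟨φ₁ + φ₂, fun v => by
            rw [AlternatingMap.add_apply, h₁ v, h₂ v, ceD_add]⟩
        zero_mem' := ⟨0, fun v => by rw [AlternatingMap.zero_apply, ceD_zero]⟩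
        smul_mem' := by
          rintro c ψ ⟨φ, h⟩
          exact ⟨c • φ, fun v => by rw [AlternatingMap.smul_apply, h v, ceD_smul]⟩ }

/-- The `n`-th Chevalley–Eilenberg cohomology space `Hⁿ(g, M)`: the quotient of the space of
`n`-cocycles by the space of `n`-coboundaries (viewed inside the cocycles). -/
abbrev ceH (n : ℕ) : Type _ :=
  ↥(ceZ k g M n) ⧸ (ceB k g M n).comap (ceZ k g M n).subtype

end ChevalleyEilenberg

/-- The Lie algebra `sl₃(k)` of traceless `3 × 3` matrices over `k`. -/
abbrev sl3 (k : Type*) [Field k] := ↥(LieAlgebra.SpecialLinear.sl (Fin 3) k)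

/-- `k` as the trivial one-dimensional module over `sl₃(k)` (zero bracket action). -/
instance (k : Type*) [Field k] : LieRingModule (sl3 k) k where
  bracket _ _ := 0
  add_lie _ _ _ := by simp
  lie_add _ _ _ := by simp
  leibniz_lie _ _ _ := by simp

instance (k : Type*) [Field k] : LieModule k (sl3 k) k where
  smul_lie _ _ _ := by simp [Bracket.bracket]
  lie_smul _ _ _ := by simp [Bracket.bracket]

section Aux
variable {k : Type*} [Field k]

/-- basis vectors as matrices -/
def bMat (k : Type*) [Field k] : Fin 8 → Matrix (Fin 3) (Fin 3) k :=
  ![!![0,1,0;0,0,0;0,0,0], !![0,0,0;0,0,1;0,0,0], !![0,0,0;0,0,0;1,0,0],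
    !![0,0,0;1,0,0;0,0,0], !![0,0,0;0,0,0;0,1,0], !![0,0,1;0,0,0;0,0,0],
    !![1,0,0;0,-1,0;0,0,0], !![1,0,0;0,1,0;0,0,1]]

lemma three_eq_zero [CharP k 3] : (3 : k) = 0 := by
  exact_mod_cast CharP.cast_eq_zero k 3

lemma bMat_trace [CharP k 3] (i : Fin 8) : (bMat k i).trace = 0 := by
  have h3 := three_eq_zero (k := k)
  fin_cases i <;> simp [bMat, Matrix.trace, Fin.sum_univ_three]
  linear_combination h3

def bV (k : Type*) [Field k] [CharP k 3] (i : Fin 8) : sl3 k :=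
  ⟨bMat k i, by
    rw [LieAlgebra.SpecialLinear.sl]
    exact bMat_trace i⟩

def slCoord (k : Type*) [Field k] : sl3 k →ₗ[k] (Fin 8 → k) where
  toFun x := ![x.1 0 1, x.1 1 2, x.1 2 0, x.1 1 0, x.1 2 1, x.1 0 2, x.1 0 0 - x.1 2 2, x.1 2 2]
  map_add' x y := by
    ext i; fin_cases i <;> simp; ring
  map_smul' c x := by
    ext i; fin_cases i <;> simp; ring

lemma sum_bV [CharP k 3] (x : sl3 k) : ∑ i, slCoord k x i • bV k i = x := by
  have h3 := three_eq_zero (k := k)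
  have ht : x.1 0 0 + x.1 1 1 + x.1 2 2 = 0 := by
    have := x.2
    have h : Matrix.trace x.1 = 0 := this
    rwa [Matrix.trace_fin_three] at h
  apply Subtype.ext
  ext i j
  fin_cases i <;> fin_cases j <;> simp [slCoord, bV, bMat, Fin.sum_univ_eight]
  linear_combination -ht + x.1 2 2 * h3

lemma slCoord_bV [CharP k 3] (i : Fin 8) : slCoord k (bV k i) = Pi.single i 1 := by
  ext j
  fin_cases i <;> fin_cases j <;> simp [slCoord, bV, bMat]

noncomputable def slBasis (k : Type*) [Field k] [CharP k 3] : Module.Basis (Fin 8) k (sl3 k) :=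
  Module.Basis.ofEquivFun (LinearEquiv.ofLinearMap (slCoord k) (Fintype.linearCombination k (bV k))
    (by ext i j; simp [Fintype.linearCombination_apply, slCoord_bV])
    (by ext1 x; simp [Fintype.linearCombination_apply, sum_bV]))

lemma slBasis_apply [CharP k 3] (i : Fin 8) : slBasis k i = bV k i := by
  simp [slBasis, Fintype.linearCombination_apply, Pi.single_apply]

/-- `ceD` is alternating in characteristic three. -/
lemma ceD_alt [CharP k 3] {n : ℕ} (ψ : sl3 k [⋀^Fin (n + 1)]→ₗ[k] k) :
    ∃ Φ : sl3 k [⋀^Fin (n + 2)]→ₗ[k] k, ∀ v, Φ v = ceD k (sl3 k) k ψ v := by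
  have h3 := three_eq_zero (k := k)
  let f : sl3 k →ₗ[k] sl3 k →ₗ[k] sl3 k [⋀^Fin n]→ₗ[k] k :=
    LinearMap.mk₂ k (fun x y => ψ.curryLeft ⁅x, y⁆) (by intros; simp) (by intros; simp)
      (by intros; simp) (by intros; simp)
  refine ⟨AlternatingMap.alternatizeUncurryFin (AlternatingMap.alternatizeUncurryFinLM ∘ₗ f),
    fun v => ?_⟩
  rw [AlternatingMap.alternatizeUncurryFin_alternatizeUncurryFinLM_comp_apply]
  have h0 : ∀ (x : sl3 k) (y : k), ⁅x, y⁆ = 0 := fun _ _ => rfl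
  simp only [ceD, h0, smul_zero, Finset.sum_const_zero, add_zero]
  conv_rhs => rw [Fin.sum_univ_castSucc]
  have hl : ∀ j : Fin (n+2), ¬ (Fin.last (n+1) < j) := fun j => not_lt.2 (Fin.le_last j)
  simp only [hl, dite_false, Finset.sum_const_zero, add_zero]
  refine Finset.sum_congr rfl fun i _ => ?_
  rw [Fin.sum_univ_succ, dif_neg (by simp), zero_add]
  rw [← Finset.sum_filter_add_sum_filter_not Finset.univ (fun j : Fin (n+1) => i ≤ j)
    (fun j => dite (i.castSucc < j.succ) _ _)]
  refine (Eq.trans (congrArg₂ (· + ·) ?_ ?_) (add_zero _)).symm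
  · symm
    have hs : Finset.Ici i = Finset.univ.filter (fun j : Fin (n+1) => i ≤ j) := by ext; simp
    rw [hs]
    refine Finset.sum_congr rfl fun j hj => ?_
    have hij : i ≤ j := by simpa using hj
    rw [dif_pos (by simpa [Fin.castSucc_lt_succ_iff] using hij)]
    have e1 : ∀ x y : sl3 k, f x y - f y x = ψ.curryLeft ((-1:k) • ⁅x,y⁆) := by
      intro x y
      change ψ.curryLeft ⁅x, y⁆ - ψ.curryLeft ⁅y, x⁆ = _
      rw [← lie_skew x y, map_neg, map_smul, map_neg]
      ext w
      simp
      linear_combination -h3 * ψ (Matrix.vecCons ⁅y,x⁆ w)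
    rw [← AlternatingMap.sub_apply, e1, map_smul]
    simp only [Fin.val_castSucc, Fin.val_succ, ← add_assoc, pow_succ]
    simp [Matrix.vecCons]
    rfl
  · refine Finset.sum_eq_zero fun j hj => ?_
    rw [dif_neg]
    simpa [Fin.castSucc_lt_succ_iff] using hj

/-- An alternating map is determined by increasing tuples of basis vectors. -/
lemma alt_ext [CharP k 3] {n : ℕ} {f g : sl3 k [⋀^Fin n]→ₗ[k] k}
    (h : ∀ t : Fin n → Fin 8, StrictMono t → f (bV k ∘ t) = g (bV k ∘ t)) : f = g := by
  refine Module.Basis.ext_alternating (slBasis k) fun v hv => ?_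
  have e : (fun i => slBasis k (v i)) = bV k ∘ v := by ext1 i; simp [slBasis_apply]
  rw [e]
  have hs : StrictMono (v ∘ Tuple.sort v) :=
    (Tuple.monotone_sort v).strictMono_of_injective (hv.comp (Tuple.sort v).injective)
  have := h _ hs
  rw [← Function.comp_assoc, f.map_perm, g.map_perm] at this
  rcases Int.units_eq_one_or (Equiv.Perm.sign (Tuple.sort v)) with h1 | h1 <;>
    simpa [h1] using this

/-- Existence of alternating maps with given coordinates. -/
lemma alt_exists [CharP k 3] {n : ℕ} (a : (Fin n → Fin 8) → k) :
    ∃ f : sl3 k [⋀^Fin n]→ₗ[k] k, ∀ t, StrictMono t → f (bV k ∘ t) = a t := by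
  classical
  let E : (Fin n → Fin 8) → sl3 k [⋀^Fin n]→ₗ[k] k := fun s =>
    (Matrix.detRowAlternating (R := k) (n := Fin n)).compLinearMap
      (LinearMap.pi fun i => (LinearMap.proj (s i)) ∘ₗ slCoord k)
  refine ⟨∑ s with StrictMono s, a s • E s, fun t ht => ?_⟩
  have key : ∀ s, StrictMono s → E s (bV k ∘ t) = if s = t then 1 else 0 := by
    intro s hs
    have e : E s (bV k ∘ t) = Matrix.det (Matrix.of fun i j => if s j = t i then (1:k) else 0) := by
      change Matrix.det _ = _
      congr 1
      ext i j
      simp [slCoord_bV, Pi.single_apply]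
    rw [e]
    split_ifs with hst
    · subst hst
      convert Matrix.det_one (n := Fin n) (R := k) using 2
      ext i j
      simp [Matrix.one_apply, hs.injective.eq_iff, eq_comm]
    · have : ∃ j, ∀ i, s j ≠ t i := by
        by_contra hc
        push Not at hc
        apply hst
        refine (StrictMono.range_inj hs ht).1 ?_
        refine Set.eq_of_subset_of_ncard_le ?_ ?_ (Set.toFinite _)
        · rintro _ ⟨j, rfl⟩
          obtain ⟨i, hi⟩ := hc j
          exact ⟨i, hi.symm⟩
        · rw [← Set.image_univ, ← Set.image_univ, Set.ncard_image_of_injective _ hs.injective,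
            Set.ncard_image_of_injective _ ht.injective]
      obtain ⟨j, hj⟩ := this
      exact Matrix.det_eq_zero_of_column_eq_zero j (fun i => by simp [hj i])
  have hsum : ∀ S : Finset (Fin n → Fin 8), (∑ s ∈ S, a s • E s) (bV k ∘ t) =
      ∑ s ∈ S, a s * E s (bV k ∘ t) := by
    intro S
    induction S using Finset.induction_on with
    | empty => simp
    | insert s S hs ih => simp [Finset.sum_insert hs, ih]
  rw [hsum]
  rw [Finset.sum_eq_single t]
  · simp [key t ht]
  · intro s hs hst
    simp [key s (by simpa using hs), hst]
  · intro h
    simp [ht] at h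
end Aux

section Aux2
variable {k : Type*} [Field k] [CharP k 3]

set_option maxHeartbeats 4000000 in
/-- The bracket table of the chosen basis. -/
lemma bV_lie :
    ⁅bV k 0, bV k 1⁆ = bV k 5 ∧
    ⁅bV k 0, bV k 2⁆ = -bV k 4 ∧
    ⁅bV k 0, bV k 3⁆ = bV k 6 ∧
    ⁅bV k 0, bV k 4⁆ = 0 ∧
    ⁅bV k 0, bV k 5⁆ = 0 ∧
    ⁅bV k 0, bV k 6⁆ = bV k 0 ∧
    ⁅bV k 1, bV k 2⁆ = bV k 3 ∧
    ⁅bV k 1, bV k 3⁆ = 0 ∧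
    ⁅bV k 1, bV k 4⁆ = bV k 6 + -bV k 7 ∧
    ⁅bV k 1, bV k 5⁆ = 0 ∧
    ⁅bV k 1, bV k 6⁆ = bV k 1 ∧
    ⁅bV k 2, bV k 3⁆ = 0 ∧
    ⁅bV k 2, bV k 4⁆ = 0 ∧
    ⁅bV k 2, bV k 5⁆ = bV k 6 + bV k 7 ∧
    ⁅bV k 2, bV k 6⁆ = bV k 2 ∧
    ⁅bV k 3, bV k 4⁆ = -bV k 2 ∧
    ⁅bV k 3, bV k 5⁆ = bV k 1 ∧
    ⁅bV k 3, bV k 6⁆ = -bV k 3 ∧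
    ⁅bV k 4, bV k 5⁆ = -bV k 0 ∧
    ⁅bV k 4, bV k 6⁆ = -bV k 4 ∧
    ⁅bV k 5, bV k 6⁆ = -bV k 5 := by
  have h3 := three_eq_zero (k := k)
  refine ⟨?_, ?_, ?_, ?_, ?_, ?_, ?_, ?_, ?_, ?_, ?_, ?_, ?_, ?_, ?_, ?_, ?_, ?_, ?_, ?_, ?_⟩ <;>
    apply Subtype.ext <;> ext i j <;> fin_cases i <;> fin_cases j <;>
    simp [bV, bMat, LieRing.of_associative_ring_bracket]
  all_goals first | linear_combination h3 | linear_combination -h3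

lemma bV_lie7 (x : sl3 k) : ⁅x, bV k 7⁆ = 0 := by
  have h : bMat k 7 = 1 := by
    ext i j; fin_cases i <;> fin_cases j <;> simp [bMat]
  apply Subtype.ext
  simp [bV, h, LieRing.of_associative_ring_bracket]

set_option maxRecDepth 100000 in
lemma mono6 (t : Fin 6 → Fin 8) (ht : StrictMono t) :
    t ∈ ([![0, 1, 2, 3, 4, 5], ![0, 1, 2, 3, 4, 6], ![0, 1, 2, 3, 4, 7], ![0, 1, 2, 3, 5, 6],
    ![0, 1, 2, 3, 5, 7], ![0, 1, 2, 3, 6, 7], ![0, 1, 2, 4, 5, 6], ![0, 1, 2, 4, 5, 7],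
    ![0, 1, 2, 4, 6, 7], ![0, 1, 2, 5, 6, 7], ![0, 1, 3, 4, 5, 6], ![0, 1, 3, 4, 5, 7],
    ![0, 1, 3, 4, 6, 7], ![0, 1, 3, 5, 6, 7], ![0, 1, 4, 5, 6, 7], ![0, 2, 3, 4, 5, 6],
    ![0, 2, 3, 4, 5, 7], ![0, 2, 3, 4, 6, 7], ![0, 2, 3, 5, 6, 7], ![0, 2, 4, 5, 6, 7],
    ![0, 3, 4, 5, 6, 7], ![1, 2, 3, 4, 5, 6], ![1, 2, 3, 4, 5, 7], ![1, 2, 3, 4, 6, 7],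
    ![1, 2, 3, 5, 6, 7], ![1, 2, 4, 5, 6, 7], ![1, 3, 4, 5, 6, 7], ![2, 3, 4, 5, 6, 7]] : List (Fin 6 → Fin 8)) := by
  have key : ∀ a : Fin 8, ∀ b : Fin 8, a < b → ∀ c : Fin 8, b < c → ∀ d : Fin 8, c < d → ∀ e : Fin 8, d < e → ∀ f : Fin 8, e < f → 
      ![a, b, c, d, e, f] ∈ ([![0, 1, 2, 3, 4, 5], ![0, 1, 2, 3, 4, 6], ![0, 1, 2, 3, 4, 7], ![0, 1, 2, 3, 5, 6],
    ![0, 1, 2, 3, 5, 7], ![0, 1, 2, 3, 6, 7], ![0, 1, 2, 4, 5, 6], ![0, 1, 2, 4, 5, 7],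
    ![0, 1, 2, 4, 6, 7], ![0, 1, 2, 5, 6, 7], ![0, 1, 3, 4, 5, 6], ![0, 1, 3, 4, 5, 7],
    ![0, 1, 3, 4, 6, 7], ![0, 1, 3, 5, 6, 7], ![0, 1, 4, 5, 6, 7], ![0, 2, 3, 4, 5, 6],
    ![0, 2, 3, 4, 5, 7], ![0, 2, 3, 4, 6, 7], ![0, 2, 3, 5, 6, 7], ![0, 2, 4, 5, 6, 7],
    ![0, 3, 4, 5, 6, 7], ![1, 2, 3, 4, 5, 6], ![1, 2, 3, 4, 5, 7], ![1, 2, 3, 4, 6, 7],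
    ![1, 2, 3, 5, 6, 7], ![1, 2, 4, 5, 6, 7], ![1, 3, 4, 5, 6, 7], ![2, 3, 4, 5, 6, 7]] : List (Fin 6 → Fin 8)) := by
    decide
  have e : t = ![t 0, t 1, t 2, t 3, t 4, t 5] := by
    ext i; fin_cases i <;> rfl
  rw [e]
  exact key _ _ (ht (by decide)) _ (ht (by decide)) _ (ht (by decide)) _ (ht (by decide)) _ (ht (by decide))

set_option maxRecDepth 100000 in
lemma mono7 (t : Fin 7 → Fin 8) (ht : StrictMono t) :
    t ∈ ([![0, 1, 2, 3, 4, 5, 6], ![0, 1, 2, 3, 4, 5, 7], ![0, 1, 2, 3, 4, 6, 7], ![0, 1, 2, 3, 5, 6, 7],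
    ![0, 1, 2, 4, 5, 6, 7], ![0, 1, 3, 4, 5, 6, 7], ![0, 2, 3, 4, 5, 6, 7], ![1, 2, 3, 4, 5, 6, 7]] : List (Fin 7 → Fin 8)) := by
  have key : ∀ a : Fin 8, ∀ b : Fin 8, a < b → ∀ c : Fin 8, b < c → ∀ d : Fin 8, c < d → ∀ e : Fin 8, d < e → ∀ f : Fin 8, e < f → ∀ g : Fin 8, f < g → 
      ![a, b, c, d, e, f, g] ∈ ([![0, 1, 2, 3, 4, 5, 6], ![0, 1, 2, 3, 4, 5, 7], ![0, 1, 2, 3, 4, 6, 7], ![0, 1, 2, 3, 5, 6, 7],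
    ![0, 1, 2, 4, 5, 6, 7], ![0, 1, 3, 4, 5, 6, 7], ![0, 2, 3, 4, 5, 6, 7], ![1, 2, 3, 4, 5, 6, 7]] : List (Fin 7 → Fin 8)) := by
    decide
  have e : t = ![t 0, t 1, t 2, t 3, t 4, t 5, t 6] := by
    ext i; fin_cases i <;> rfl
  rw [e]
  exact key _ _ (ht (by decide)) _ (ht (by decide)) _ (ht (by decide)) _ (ht (by decide)) _ (ht (by decide)) _ (ht (by decide))


section Sorting
variable {n : ℕ}

lemma sw0 (φ : sl3 k [⋀^Fin (n + 2)]→ₗ[k] k) (x y : sl3 k) (v : Fin n → sl3 k) :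
    φ (Matrix.vecCons x (Matrix.vecCons y v)) = -φ (Matrix.vecCons y (Matrix.vecCons x v)) := by
  rw [← φ.map_swap _ (i := 0) (j := 1) (by simp)]
  congr 1
  ext i
  refine Fin.cases ?_ (fun i => Fin.cases ?_ (fun i => ?_) i) i
  · simp
  · simp
  · rw [Function.comp_apply, Equiv.swap_apply_of_ne_of_ne]
    · simp
    · exact Fin.succ_ne_zero _
    · exact fun h => Fin.succ_ne_zero i (Fin.succ_injective _ h)

lemma eq0 (φ : sl3 k [⋀^Fin (n + 2)]→ₗ[k] k) (x : sl3 k) (v : Fin n → sl3 k) :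
    φ (Matrix.vecCons x (Matrix.vecCons x v)) = 0 :=
  φ.map_eq_zero_of_eq _ (i := 0) (j := 1) (by simp) (by simp)

lemma so0 (φ : sl3 k [⋀^Fin (n + 2)]→ₗ[k] k) (i j : Fin 8) (_ : j < i)
    (v : Fin n → sl3 k) :
    φ (Matrix.vecCons (bV k i) (Matrix.vecCons (bV k j) v)) =
      -φ (Matrix.vecCons (bV k j) (Matrix.vecCons (bV k i) v)) :=
  sw0 φ _ _ _

lemma sw1 (φ : sl3 k [⋀^Fin (n + 3)]→ₗ[k] k) (w0 : sl3 k) (x y : sl3 k) (v : Fin n → sl3 k) :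
    φ (Matrix.vecCons w0 (Matrix.vecCons x (Matrix.vecCons y v))) =
      -φ (Matrix.vecCons w0 (Matrix.vecCons y (Matrix.vecCons x v))) :=
  sw0 (φ.curryLeft w0)  x y v
lemma eq1 (φ : sl3 k [⋀^Fin (n + 3)]→ₗ[k] k) (w0 : sl3 k) (x : sl3 k) (v : Fin n → sl3 k) :
    φ (Matrix.vecCons w0 (Matrix.vecCons x (Matrix.vecCons x v))) = 0 :=
  eq0 (φ.curryLeft w0)  x v
lemma so1 (φ : sl3 k [⋀^Fin (n + 3)]→ₗ[k] k) (w0 : sl3 k) (i j : Fin 8) (_ : j < i)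
    (v : Fin n → sl3 k) :
    φ (Matrix.vecCons w0 (Matrix.vecCons (bV k i) (Matrix.vecCons (bV k j) v))) =
      -φ (Matrix.vecCons w0 (Matrix.vecCons (bV k j) (Matrix.vecCons (bV k i) v))) :=
  sw1 φ _ _ _ _

lemma sw2 (φ : sl3 k [⋀^Fin (n + 4)]→ₗ[k] k) (w0 w1 : sl3 k) (x y : sl3 k) (v : Fin n → sl3 k) :
    φ (Matrix.vecCons w0 (Matrix.vecCons w1 (Matrix.vecCons x (Matrix.vecCons y v)))) =
      -φ (Matrix.vecCons w0 (Matrix.vecCons w1 (Matrix.vecCons y (Matrix.vecCons x v)))) :=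
  sw1 (φ.curryLeft w0) w1 x y v
lemma eq2 (φ : sl3 k [⋀^Fin (n + 4)]→ₗ[k] k) (w0 w1 : sl3 k) (x : sl3 k) (v : Fin n → sl3 k) :
    φ (Matrix.vecCons w0 (Matrix.vecCons w1 (Matrix.vecCons x (Matrix.vecCons x v)))) = 0 :=
  eq1 (φ.curryLeft w0) w1 x v
lemma so2 (φ : sl3 k [⋀^Fin (n + 4)]→ₗ[k] k) (w0 w1 : sl3 k) (i j : Fin 8) (_ : j < i)
    (v : Fin n → sl3 k) :
    φ (Matrix.vecCons w0 (Matrix.vecCons w1 (Matrix.vecCons (bV k i) (Matrix.vecCons (bV k j) v)))) =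
      -φ (Matrix.vecCons w0 (Matrix.vecCons w1 (Matrix.vecCons (bV k j) (Matrix.vecCons (bV k i) v)))) :=
  sw2 φ _ _ _ _ _

lemma sw3 (φ : sl3 k [⋀^Fin (n + 5)]→ₗ[k] k) (w0 w1 w2 : sl3 k) (x y : sl3 k) (v : Fin n → sl3 k) :
    φ (Matrix.vecCons w0 (Matrix.vecCons w1 (Matrix.vecCons w2 (Matrix.vecCons x (Matrix.vecCons y v))))) =
      -φ (Matrix.vecCons w0 (Matrix.vecCons w1 (Matrix.vecCons w2 (Matrix.vecCons y (Matrix.vecCons x v))))) :=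
  sw2 (φ.curryLeft w0) w1 w2 x y v
lemma eq3 (φ : sl3 k [⋀^Fin (n + 5)]→ₗ[k] k) (w0 w1 w2 : sl3 k) (x : sl3 k) (v : Fin n → sl3 k) :
    φ (Matrix.vecCons w0 (Matrix.vecCons w1 (Matrix.vecCons w2 (Matrix.vecCons x (Matrix.vecCons x v))))) = 0 :=
  eq2 (φ.curryLeft w0) w1 w2 x v
lemma so3 (φ : sl3 k [⋀^Fin (n + 5)]→ₗ[k] k) (w0 w1 w2 : sl3 k) (i j : Fin 8) (_ : j < i)
    (v : Fin n → sl3 k) :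
    φ (Matrix.vecCons w0 (Matrix.vecCons w1 (Matrix.vecCons w2 (Matrix.vecCons (bV k i) (Matrix.vecCons (bV k j) v))))) =
      -φ (Matrix.vecCons w0 (Matrix.vecCons w1 (Matrix.vecCons w2 (Matrix.vecCons (bV k j) (Matrix.vecCons (bV k i) v))))) :=
  sw3 φ _ _ _ _ _ _

lemma sw4 (φ : sl3 k [⋀^Fin (n + 6)]→ₗ[k] k) (w0 w1 w2 w3 : sl3 k) (x y : sl3 k) (v : Fin n → sl3 k) :
    φ (Matrix.vecCons w0 (Matrix.vecCons w1 (Matrix.vecCons w2 (Matrix.vecCons w3 (Matrix.vecCons x (Matrix.vecCons y v)))))) =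
      -φ (Matrix.vecCons w0 (Matrix.vecCons w1 (Matrix.vecCons w2 (Matrix.vecCons w3 (Matrix.vecCons y (Matrix.vecCons x v)))))) :=
  sw3 (φ.curryLeft w0) w1 w2 w3 x y v
lemma eq4 (φ : sl3 k [⋀^Fin (n + 6)]→ₗ[k] k) (w0 w1 w2 w3 : sl3 k) (x : sl3 k) (v : Fin n → sl3 k) :
    φ (Matrix.vecCons w0 (Matrix.vecCons w1 (Matrix.vecCons w2 (Matrix.vecCons w3 (Matrix.vecCons x (Matrix.vecCons x v)))))) = 0 :=
  eq3 (φ.curryLeft w0) w1 w2 w3 x v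
lemma so4 (φ : sl3 k [⋀^Fin (n + 6)]→ₗ[k] k) (w0 w1 w2 w3 : sl3 k) (i j : Fin 8) (_ : j < i)
    (v : Fin n → sl3 k) :
    φ (Matrix.vecCons w0 (Matrix.vecCons w1 (Matrix.vecCons w2 (Matrix.vecCons w3 (Matrix.vecCons (bV k i) (Matrix.vecCons (bV k j) v)))))) =
      -φ (Matrix.vecCons w0 (Matrix.vecCons w1 (Matrix.vecCons w2 (Matrix.vecCons w3 (Matrix.vecCons (bV k j) (Matrix.vecCons (bV k i) v)))))) :=
  sw4 φ _ _ _ _ _ _ _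

lemma sw5 (φ : sl3 k [⋀^Fin (n + 7)]→ₗ[k] k) (w0 w1 w2 w3 w4 : sl3 k) (x y : sl3 k) (v : Fin n → sl3 k) :
    φ (Matrix.vecCons w0 (Matrix.vecCons w1 (Matrix.vecCons w2 (Matrix.vecCons w3 (Matrix.vecCons w4 (Matrix.vecCons x (Matrix.vecCons y v))))))) =
      -φ (Matrix.vecCons w0 (Matrix.vecCons w1 (Matrix.vecCons w2 (Matrix.vecCons w3 (Matrix.vecCons w4 (Matrix.vecCons y (Matrix.vecCons x v))))))) :=
  sw4 (φ.curryLeft w0) w1 w2 w3 w4 x y v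
lemma eq5 (φ : sl3 k [⋀^Fin (n + 7)]→ₗ[k] k) (w0 w1 w2 w3 w4 : sl3 k) (x : sl3 k) (v : Fin n → sl3 k) :
    φ (Matrix.vecCons w0 (Matrix.vecCons w1 (Matrix.vecCons w2 (Matrix.vecCons w3 (Matrix.vecCons w4 (Matrix.vecCons x (Matrix.vecCons x v))))))) = 0 :=
  eq4 (φ.curryLeft w0) w1 w2 w3 w4 x v
lemma so5 (φ : sl3 k [⋀^Fin (n + 7)]→ₗ[k] k) (w0 w1 w2 w3 w4 : sl3 k) (i j : Fin 8) (_ : j < i)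
    (v : Fin n → sl3 k) :
    φ (Matrix.vecCons w0 (Matrix.vecCons w1 (Matrix.vecCons w2 (Matrix.vecCons w3 (Matrix.vecCons w4 (Matrix.vecCons (bV k i) (Matrix.vecCons (bV k j) v))))))) =
      -φ (Matrix.vecCons w0 (Matrix.vecCons w1 (Matrix.vecCons w2 (Matrix.vecCons w3 (Matrix.vecCons w4 (Matrix.vecCons (bV k j) (Matrix.vecCons (bV k i) v))))))) :=
  sw5 φ _ _ _ _ _ _ _ _

lemma vneg (φ : sl3 k [⋀^Fin (n + 1)]→ₗ[k] k) (x : sl3 k) (v : Fin n → sl3 k) :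
    φ (Matrix.vecCons (-x) v) = -φ (Matrix.vecCons x v) := by
  have := φ.map_vecCons_smul v (-1 : k) x
  simpa using this

lemma vzero (φ : sl3 k [⋀^Fin (n + 1)]→ₗ[k] k) (v : Fin n → sl3 k) :
    φ (Matrix.vecCons 0 v) = 0 :=
  φ.map_coord_zero 0 rfl
end Sorting

lemma cons_eta5 (a : sl3 k) (g : Fin 4 → sl3 k) :
    (Fin.cons a g : Fin 5 → sl3 k) = ![a, g 0, g 1, g 2, g 3] := by
  ext1 i; fin_cases i <;> rfl

lemma ceD6 (φ : sl3 k [⋀^Fin 5]→ₗ[k] k) (x0 x1 x2 x3 x4 x5 : sl3 k) :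
    ceD k (sl3 k) k φ ![x0, x1, x2, x3, x4, x5] =
      0 - φ ![⁅x0, x1⁆, x2, x3, x4, x5]
        + φ ![⁅x0, x2⁆, x1, x3, x4, x5]
        - φ ![⁅x0, x3⁆, x1, x2, x4, x5]
        + φ ![⁅x0, x4⁆, x1, x2, x3, x5]
        - φ ![⁅x0, x5⁆, x1, x2, x3, x4]
        - φ ![⁅x1, x2⁆, x0, x3, x4, x5]
        + φ ![⁅x1, x3⁆, x0, x2, x4, x5]
        - φ ![⁅x1, x4⁆, x0, x2, x3, x5]
        + φ ![⁅x1, x5⁆, x0, x2, x3, x4]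
        - φ ![⁅x2, x3⁆, x0, x1, x4, x5]
        + φ ![⁅x2, x4⁆, x0, x1, x3, x5]
        - φ ![⁅x2, x5⁆, x0, x1, x3, x4]
        - φ ![⁅x3, x4⁆, x0, x1, x2, x5]
        + φ ![⁅x3, x5⁆, x0, x1, x2, x4]
        - φ ![⁅x4, x5⁆, x0, x1, x2, x3] := by
  have h0 : ∀ (x : sl3 k) (y : k), ⁅x, y⁆ = 0 := fun _ _ => rfl
  have hs : ∀ f : Fin (4 + 2) → k, ∑ i, f i = f 0 + f 1 + f 2 + f 3 + f 4 + f 5 :=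
    Fin.sum_univ_six
  simp only [ceD, h0, smul_zero, Finset.sum_const_zero, add_zero, cons_eta5]
  simp only [hs]
  simp +decide only [dite_true, dite_false, add_zero, zero_add]
  simp [Fin.succAbove, Fin.pred, Fin.lt_def]
  ring

lemma cons_eta6 (a : sl3 k) (g : Fin 5 → sl3 k) :
    (Fin.cons a g : Fin 6 → sl3 k) = ![a, g 0, g 1, g 2, g 3, g 4] := by
  ext1 i; fin_cases i <;> rfl

lemma ceD7 (φ : sl3 k [⋀^Fin 6]→ₗ[k] k) (x0 x1 x2 x3 x4 x5 x6 : sl3 k) :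
    ceD k (sl3 k) k φ ![x0, x1, x2, x3, x4, x5, x6] =
      0 - φ ![⁅x0, x1⁆, x2, x3, x4, x5, x6]
        + φ ![⁅x0, x2⁆, x1, x3, x4, x5, x6]
        - φ ![⁅x0, x3⁆, x1, x2, x4, x5, x6]
        + φ ![⁅x0, x4⁆, x1, x2, x3, x5, x6]
        - φ ![⁅x0, x5⁆, x1, x2, x3, x4, x6]
        + φ ![⁅x0, x6⁆, x1, x2, x3, x4, x5]
        - φ ![⁅x1, x2⁆, x0, x3, x4, x5, x6]
        + φ ![⁅x1, x3⁆, x0, x2, x4, x5, x6]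
        - φ ![⁅x1, x4⁆, x0, x2, x3, x5, x6]
        + φ ![⁅x1, x5⁆, x0, x2, x3, x4, x6]
        - φ ![⁅x1, x6⁆, x0, x2, x3, x4, x5]
        - φ ![⁅x2, x3⁆, x0, x1, x4, x5, x6]
        + φ ![⁅x2, x4⁆, x0, x1, x3, x5, x6]
        - φ ![⁅x2, x5⁆, x0, x1, x3, x4, x6]
        + φ ![⁅x2, x6⁆, x0, x1, x3, x4, x5]
        - φ ![⁅x3, x4⁆, x0, x1, x2, x5, x6]
        + φ ![⁅x3, x5⁆, x0, x1, x2, x4, x6]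
        - φ ![⁅x3, x6⁆, x0, x1, x2, x4, x5]
        - φ ![⁅x4, x5⁆, x0, x1, x2, x3, x6]
        + φ ![⁅x4, x6⁆, x0, x1, x2, x3, x5]
        - φ ![⁅x5, x6⁆, x0, x1, x2, x3, x4] := by
  have h0 : ∀ (x : sl3 k) (y : k), ⁅x, y⁆ = 0 := fun _ _ => rfl
  have hs : ∀ f : Fin (5 + 2) → k, ∑ i, f i = f 0 + f 1 + f 2 + f 3 + f 4 + f 5 + f 6 :=
    Fin.sum_univ_seven
  simp only [ceD, h0, smul_zero, Finset.sum_const_zero, add_zero, cons_eta6]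
  simp only [hs]
  simp +decide only [dite_true, dite_false, add_zero, zero_add]
  simp [Fin.succAbove, Fin.pred, Fin.lt_def]
  ring

end Aux2

section Aux3
variable {k : Type*} [Field k] [CharP k 3]

lemma bcomp {n : ℕ} (a : Fin 8) (t : Fin n → Fin 8) :
    bV k ∘ Matrix.vecCons a t = Matrix.vecCons (bV k a) (bV k ∘ t) := by
  ext1 i
  refine Fin.cases ?_ (fun i => ?_) i <;> simp

lemma bcomp0 (t : Fin 0 → Fin 8) : bV k ∘ t = ![] := Subsingleton.elim _ _

lemma exists5 (A : ℕ → k) : ∃ φ : sl3 k [⋀^Fin 5]→ₗ[k] k, ∀ a b c d e : Fin 8,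
    a < b → b < c → c < d → d < e →
    φ ![bV k a, bV k b, bV k c, bV k d, bV k e] =
      A (10000 * a.val + 1000 * b.val + 100 * c.val + 10 * d.val + e.val) := by
  obtain ⟨φ, hφ⟩ := alt_exists (k := k) (n := 5)
    (fun t => A (10000 * (t 0).val + 1000 * (t 1).val + 100 * (t 2).val + 10 * (t 3).val + (t 4).val))
  refine ⟨φ, fun a b c d e h0 h1 h2 h3 => ?_⟩
  have hm : StrictMono ![a, b, c, d, e] := by
    rw [Fin.strictMono_iff_lt_succ]
    intro i
    fin_cases i <;> simpa
  have := hφ _ hm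
  simp only [bcomp, bcomp0] at this
  rw [this]
  rfl

lemma exists6 (A : ℕ → k) : ∃ φ : sl3 k [⋀^Fin 6]→ₗ[k] k, ∀ a b c d e f : Fin 8,
    a < b → b < c → c < d → d < e → e < f →
    φ ![bV k a, bV k b, bV k c, bV k d, bV k e, bV k f] =
      A (100000 * a.val + 10000 * b.val + 1000 * c.val + 100 * d.val + 10 * e.val + f.val) := by
  obtain ⟨φ, hφ⟩ := alt_exists (k := k) (n := 6)
    (fun t => A (100000 * (t 0).val + 10000 * (t 1).val + 1000 * (t 2).val + 100 * (t 3).val + 10 * (t 4).val + (t 5).val))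
  refine ⟨φ, fun a b c d e f h0 h1 h2 h3 h4 => ?_⟩
  have hm : StrictMono ![a, b, c, d, e, f] := by
    rw [Fin.strictMono_iff_lt_succ]
    intro i
    fin_cases i <;> simpa
  have := hφ _ hm
  simp only [bcomp, bcomp0] at this
  rw [this]
  rfl

/-- The six index tuples detecting the cohomology in degree six. -/
def tau : Fin 6 → Fin 6 → Fin 8 :=
  ![![0, 1, 3, 5, 6, 7],
    ![0, 1, 4, 5, 6, 7],
    ![0, 2, 3, 4, 6, 7],
    ![0, 2, 4, 5, 6, 7],
    ![1, 2, 3, 4, 6, 7],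
    ![1, 2, 3, 5, 6, 7]]

set_option maxHeartbeats 4000000 in
lemma bdry_tau (φ : sl3 k [⋀^Fin 5]→ₗ[k] k) (i : Fin 6) :
    ceD k (sl3 k) k φ (bV k ∘ tau i) = 0 := by
  have h3 := three_eq_zero (k := k)
  obtain ⟨h01, h02, h03, h04, h05, h06, h12, h13, h14, h15, h16, h23, h24, h25, h26, h34,
    h35, h36, h45, h46, h56⟩ :=
    bV_lie (k := k)
  fin_cases i <;> simp only [tau] <;> simp <;> simp only [bcomp, bcomp0, ceD6, ceD7, h01, h02, h03, h04, h05, h06, h12, h13, h14, h15, h16, h23, h24, h25, h26, h34,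
    h35, h36, h45, h46, h56, bV_lie7, vneg, vzero,
    AlternatingMap.map_vecCons_add] <;>
    simp +decide only [eq0, eq1, eq2, eq3, eq4, so0, so1, so2, so3, so4, neg_neg, neg_zero,
    zero_add, add_zero, sub_zero, zero_sub, sub_neg_eq_add]
  all_goals grind

set_option maxHeartbeats 4000000 in
lemma cocycle_exists (c : Fin 6 → k) : ∃ ψ : sl3 k [⋀^Fin 6]→ₗ[k] k,
    ψ ∈ ceZ k (sl3 k) k 6 ∧ ∀ i, ψ (bV k ∘ tau i) = c i := by
  have h3 := three_eq_zero (k := k)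
  obtain ⟨h01, h02, h03, h04, h05, h06, h12, h13, h14, h15, h16, h23, h24, h25, h26, h34,
    h35, h36, h45, h46, h56⟩ :=
    bV_lie (k := k)
  obtain ⟨ψ, hψ⟩ := exists6 (k := k) (fun m =>
      if m = 13567 then c 0 else
      if m = 14567 then c 1 else
      if m = 23467 then c 2 else
      if m = 24567 then c 3 else
      if m = 123467 then c 4 else
      if m = 123567 then c 5 else
      0)
  refine ⟨ψ, ?_, ?_⟩
  · obtain ⟨Φ, hΦ⟩ := ceD_alt ψ
    have : Φ = 0 := by
      refine alt_ext fun t ht => ?_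
      rw [hΦ, AlternatingMap.zero_apply]
      have := mono7 t ht
      simp only [List.mem_cons, List.not_mem_nil, or_false] at this
      rcases this with rfl | rfl | rfl | rfl | rfl | rfl | rfl | rfl <;>
      simp only [bcomp, bcomp0, ceD6, ceD7, h01, h02, h03, h04, h05, h06, h12, h13, h14, h15, h16, h23, h24, h25, h26, h34,
    h35, h36, h45, h46, h56, bV_lie7, vneg, vzero,
    AlternatingMap.map_vecCons_add] <;>
      simp +decide only [eq0, eq1, eq2, eq3, eq4, so0, so1, so2, so3, so4, neg_neg, neg_zero,
    zero_add, add_zero, sub_zero, zero_sub, sub_neg_eq_add] <;>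
      simp +decide [hψ]
    intro v
    rw [← hΦ, this, AlternatingMap.zero_apply]
  · intro i
    fin_cases i <;> simp only [tau] <;> simp [bcomp, bcomp0] <;> simp +decide [hψ]

set_option maxHeartbeats 4000000 in
lemma cocycle_eqs (ψ : sl3 k [⋀^Fin 6]→ₗ[k] k) (h : ψ ∈ ceZ k (sl3 k) k 6) :
    ψ ![bV k 2, bV k 3, bV k 4, bV k 5, bV k 6, bV k 7] = ψ ![bV k 0, bV k 1, bV k 2, bV k 3, bV k 4, bV k 7] ∧
    ψ ![bV k 1, bV k 3, bV k 4, bV k 5, bV k 6, bV k 7] = -ψ ![bV k 0, bV k 1, bV k 2, bV k 3, bV k 5, bV k 7] ∧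
    ψ ![bV k 0, bV k 1, bV k 2, bV k 4, bV k 5, bV k 7] = ψ ![bV k 0, bV k 3, bV k 4, bV k 5, bV k 6, bV k 7] ∧
    ψ ![bV k 0, bV k 1, bV k 3, bV k 4, bV k 5, bV k 7] = -ψ ![bV k 0, bV k 1, bV k 2, bV k 5, bV k 6, bV k 7] ∧
    ψ ![bV k 0, bV k 2, bV k 3, bV k 4, bV k 5, bV k 7] = ψ ![bV k 0, bV k 1, bV k 2, bV k 4, bV k 6, bV k 7] ∧
    ψ ![bV k 1, bV k 2, bV k 3, bV k 4, bV k 5, bV k 7] = -ψ ![bV k 0, bV k 1, bV k 2, bV k 3, bV k 6, bV k 7] ∧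
    ψ ![bV k 0, bV k 1, bV k 3, bV k 4, bV k 6, bV k 7] = ψ ![bV k 0, bV k 2, bV k 3, bV k 5, bV k 6, bV k 7] ∧
    ψ ![bV k 1, bV k 2, bV k 4, bV k 5, bV k 6, bV k 7] = ψ ![bV k 0, bV k 2, bV k 3, bV k 5, bV k 6, bV k 7] := by
  have h3 := three_eq_zero (k := k)
  obtain ⟨h01, h02, h03, h04, h05, h06, h12, h13, h14, h15, h16, h23, h24, h25, h26, h34,
    h35, h36, h45, h46, h56⟩ :=
    bV_lie (k := k)
  have h : ∀ t : Fin 7 → Fin 8, ceD k (sl3 k) k ψ (bV k ∘ t) = 0 := fun t => h _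
  have e0 := h ![0, 1, 2, 3, 4, 5, 6]
  have e1 := h ![0, 1, 2, 3, 4, 5, 7]
  have e2 := h ![0, 1, 2, 3, 4, 6, 7]
  have e3 := h ![0, 1, 2, 3, 5, 6, 7]
  have e4 := h ![0, 1, 2, 4, 5, 6, 7]
  have e5 := h ![0, 1, 3, 4, 5, 6, 7]
  have e6 := h ![0, 2, 3, 4, 5, 6, 7]
  have e7 := h ![1, 2, 3, 4, 5, 6, 7]
  simp only [bcomp, bcomp0, ceD6, ceD7, h01, h02, h03, h04, h05, h06, h12, h13, h14, h15, h16, h23, h24, h25, h26, h34,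
    h35, h36, h45, h46, h56, bV_lie7, vneg, vzero,
    AlternatingMap.map_vecCons_add] at e0 e1 e2 e3 e4 e5 e6 e7
  simp +decide only [eq0, eq1, eq2, eq3, eq4, so0, so1, so2, so3, so4, neg_neg, neg_zero,
    zero_add, add_zero, sub_zero, zero_sub, sub_neg_eq_add] at e0 e1 e2 e3 e4 e5 e6 e7
  refine ⟨?_, ?_, ?_, ?_, ?_, ?_, ?_, ?_⟩ <;> grind

set_option maxHeartbeats 8000000 in
lemma exact6 (ψ : sl3 k [⋀^Fin 6]→ₗ[k] k) (h : ψ ∈ ceZ k (sl3 k) k 6)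
    (h' : ∀ i, ψ (bV k ∘ tau i) = 0) :
    ∃ φ : sl3 k [⋀^Fin 5]→ₗ[k] k, ∀ v, ψ v = ceD k (sl3 k) k φ v := by
  have h3 := three_eq_zero (k := k)
  obtain ⟨h01, h02, h03, h04, h05, h06, h12, h13, h14, h15, h16, h23, h24, h25, h26, h34,
    h35, h36, h45, h46, h56⟩ :=
    bV_lie (k := k)
  obtain ⟨e0, e1, e2, e3, e4, e5, e6, e7⟩ := cocycle_eqs ψ h
  have z0 := h' 0
  have z1 := h' 1
  have z2 := h' 2
  have z3 := h' 3
  have z4 := h' 4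
  have z5 := h' 5
  simp [tau, bcomp, bcomp0] at z0 z1 z2 z3 z4 z5
  obtain ⟨φ, hφ⟩ := exists5 (k := k) (fun m =>
      if m = 12456 then -ψ ![bV k 0, bV k 1, bV k 2, bV k 3, bV k 4, bV k 5] else
      if m = 1234 then -ψ ![bV k 0, bV k 1, bV k 2, bV k 3, bV k 4, bV k 6] else
      if m = 23457 then ψ ![bV k 2, bV k 3, bV k 4, bV k 5, bV k 6, bV k 7] else
      if m = 1235 then -ψ ![bV k 0, bV k 1, bV k 2, bV k 3, bV k 5, bV k 6] else
      if m = 13457 then ψ ![bV k 1, bV k 3, bV k 4, bV k 5, bV k 6, bV k 7] else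
      if m = 1237 then -ψ ![bV k 0, bV k 1, bV k 2, bV k 3, bV k 6, bV k 7] else
      if m = 1245 then -ψ ![bV k 0, bV k 1, bV k 2, bV k 4, bV k 5, bV k 6] else
      if m = 3457 then ψ ![bV k 0, bV k 3, bV k 4, bV k 5, bV k 6, bV k 7] else
      if m = 1247 then -ψ ![bV k 0, bV k 1, bV k 2, bV k 4, bV k 6, bV k 7] else
      if m = 1257 then -ψ ![bV k 0, bV k 1, bV k 2, bV k 5, bV k 6, bV k 7] else
      if m = 1345 then ψ ![bV k 0, bV k 1, bV k 3, bV k 4, bV k 5, bV k 6] else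
      if m = 1267 then ψ ![bV k 0, bV k 1, bV k 3, bV k 4, bV k 6, bV k 7] else
      if m = 2345 then ψ ![bV k 0, bV k 2, bV k 3, bV k 4, bV k 5, bV k 6] else
      if m = 12345 then ψ ![bV k 1, bV k 2, bV k 3, bV k 4, bV k 5, bV k 6] else
      0)
  obtain ⟨Φ, hΦ⟩ := ceD_alt φ
  refine ⟨φ, fun v => ?_⟩
  rw [← hΦ]
  congr 1
  refine alt_ext fun t ht => ?_
  rw [hΦ]
  have := mono6 t ht
  clear h h' hΦ Φ
  simp only [List.mem_cons, List.not_mem_nil, or_false] at this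
  rcases this with rfl | rfl | rfl | rfl | rfl | rfl | rfl | rfl | rfl | rfl | rfl | rfl | rfl | rfl | rfl | rfl | rfl | rfl | rfl | rfl | rfl | rfl | rfl | rfl | rfl | rfl | rfl | rfl <;>
  simp only [bcomp, bcomp0, ceD6, ceD7, h01, h02, h03, h04, h05, h06, h12, h13, h14, h15, h16, h23, h24, h25, h26, h34,
    h35, h36, h45, h46, h56, bV_lie7, vneg, vzero,
    AlternatingMap.map_vecCons_add] <;>
  simp +decide only [eq0, eq1, eq2, eq3, eq4, so0, so1, so2, so3, so4, neg_neg, neg_zero,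
    zero_add, add_zero, sub_zero, zero_sub, sub_neg_eq_add] <;>
  simp +decide [hφ] <;>
  grind

set_option maxHeartbeats 8000000 in
lemma exact7 (ψ : sl3 k [⋀^Fin 7]→ₗ[k] k) :
    ∃ φ : sl3 k [⋀^Fin 6]→ₗ[k] k, ∀ v, ψ v = ceD k (sl3 k) k φ v := by
  have h3 := three_eq_zero (k := k)
  obtain ⟨h01, h02, h03, h04, h05, h06, h12, h13, h14, h15, h16, h23, h24, h25, h26, h34,
    h35, h36, h45, h46, h56⟩ :=
    bV_lie (k := k)
  obtain ⟨φ, hφ⟩ := exists6 (k := k) (fun m =>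
      if m = 13467 then ψ ![bV k 0, bV k 1, bV k 2, bV k 3, bV k 4, bV k 5, bV k 6] else
      if m = 12347 then -ψ ![bV k 0, bV k 1, bV k 2, bV k 3, bV k 4, bV k 6, bV k 7] else
      if m = 12357 then -ψ ![bV k 0, bV k 1, bV k 2, bV k 3, bV k 5, bV k 6, bV k 7] else
      if m = 12457 then -ψ ![bV k 0, bV k 1, bV k 2, bV k 4, bV k 5, bV k 6, bV k 7] else
      if m = 13457 then ψ ![bV k 0, bV k 1, bV k 3, bV k 4, bV k 5, bV k 6, bV k 7] else
      if m = 23457 then ψ ![bV k 0, bV k 2, bV k 3, bV k 4, bV k 5, bV k 6, bV k 7] else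
      if m = 123457 then ψ ![bV k 1, bV k 2, bV k 3, bV k 4, bV k 5, bV k 6, bV k 7] else
      if m = 124567 then -ψ ![bV k 0, bV k 1, bV k 2, bV k 3, bV k 4, bV k 5, bV k 6] - ψ ![bV k 0, bV k 1, bV k 2, bV k 3, bV k 4, bV k 5, bV k 7] else
      0)
  obtain ⟨Φ, hΦ⟩ := ceD_alt φ
  refine ⟨φ, fun v => ?_⟩
  rw [← hΦ]
  congr 1
  refine alt_ext fun t ht => ?_
  rw [hΦ]
  have := mono7 t ht
  clear hΦ Φ
  simp only [List.mem_cons, List.not_mem_nil, or_false] at this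
  rcases this with rfl | rfl | rfl | rfl | rfl | rfl | rfl | rfl <;>
  simp only [bcomp, bcomp0, ceD6, ceD7, h01, h02, h03, h04, h05, h06, h12, h13, h14, h15, h16, h23, h24, h25, h26, h34,
    h35, h36, h45, h46, h56, bV_lie7, vneg, vzero,
    AlternatingMap.map_vecCons_add] <;>
  simp +decide only [eq0, eq1, eq2, eq3, eq4, so0, so1, so2, so3, so4, neg_neg, neg_zero,
    zero_add, add_zero, sub_zero, zero_sub, sub_neg_eq_add] <;>
  simp +decide [hφ] <;>
  grind

end Aux3

lemma finrank_quot_aux {k M : Type*} [Field k] [AddCommGroup M] [Module k M] (Z B : Submodule k M)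
    (P : M → Fin 6 → k) (hadd : ∀ x y, P (x + y) = P x + P y)
    (hsmul : ∀ (c : k) x, P (c • x) = c • P x)
    (hs : ∀ c, ∃ x ∈ Z, P x = c) (hk : ∀ x ∈ Z, x ∈ B ↔ P x = 0) :
    Module.finrank k (↥Z ⧸ B.comap Z.subtype) = 6 := by
  let Q : Z →ₗ[k] (Fin 6 → k) := ({ toFun := P, map_add' := hadd, map_smul' := hsmul } :
    M →ₗ[k] (Fin 6 → k)).domRestrict Z
  have hsurj : Function.Surjective Q := by
    intro c
    obtain ⟨x, hx, hc⟩ := hs c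
    exact ⟨⟨x, hx⟩, hc⟩
  have hker : B.comap Z.subtype = LinearMap.ker Q := by
    ext x
    rw [LinearMap.mem_ker, Submodule.mem_comap]
    exact hk x.1 x.2
  rw [hker, (Q.quotKerEquivOfSurjective hsurj).finrank_eq]
  simp

lemma subsingleton_quot_aux {k M : Type*} [Field k] [AddCommGroup M] [Module k M]
    (Z B : Submodule k M) (hk : ∀ x, x ∈ B) :
    Subsingleton (↥Z ⧸ B.comap Z.subtype) := by
  rw [Submodule.Quotient.subsingleton_iff, eq_top_iff]
  intro x _
  exact hk x.1

theorem H6_H7_trivial_coeffs (k : Type*) [Field k] [IsAlgClosed k] [CharP k 3] :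
    Module.finrank k (ceH k (sl3 k) k 6) = 6 ∧ Subsingleton (ceH k (sl3 k) k 7) := by
  constructor
  · refine finrank_quot_aux (ceZ k (sl3 k) k 6) (ceB k (sl3 k) k 6)
      (fun ψ i => ψ (bV k ∘ tau i)) (fun _ _ => rfl) (fun _ _ => rfl) ?_ ?_
    · intro c
      obtain ⟨ψ, hψ, hc⟩ := cocycle_exists c
      exact ⟨ψ, hψ, funext hc⟩
    · intro ψ hψ
      constructor
      · rintro ⟨φ, hφ⟩
        ext i
        exact (hφ _).trans (bdry_tau φ i)
      · intro h
        exact exact6 ψ hψ (fun i => congrFun h i)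
  · exact subsingleton_quot_aux (ceZ k (sl3 k) k 7) (ceB k (sl3 k) k 7) (fun ψ => exact7 ψ)
end

section
/- Let k be an algebraically closed field of characteristic 3, let g = sl_3(k) be the Lie algebra of traceless 3×3 matrices over k, let Z(g) be its center, and let L = g/Z(g) be the 7-dimensional quotient g-module with the action induced by the adjoint action. Then H^2(g, L) = 0, H^6(g, L) = 0, and H^8(g, L) = 0. -/
/-- The quotient `sl₃(k)/Z(sl₃(k))` of `sl₃(k)` by its center, as a module over `sl₃(k)`
via the action induced by the adjoint action. -/
abbrev sl3ModCenter (k : Type*) [Field k] := (sl3 k) ⧸ LieAlgebra.center k (sl3 k)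


set_option linter.unusedSectionVars false

namespace SlThree

/-- Formal linear combinations: lists of pairs (code, coefficient). -/
abbrev LC := List (ℕ × ℕ)

/-- The sign `(-1)^i` modulo 3. -/
def sg (i : ℕ) : ℕ := bif Nat.beq (i % 2) 0 then 1 else 2

/-- Insert `p` in an increasing list, with sign (0 if already there). -/
def ins (p : ℕ) : List ℕ → ℕ × List ℕ
  | [] => (1, [p])
  | q :: L => bif Nat.blt p q then (1, p :: q :: L) else bif Nat.beq p q then (0, [])
      else (2 * (ins p L).1 % 3, q :: (ins p L).2)

section ev
variable {k : Type*} [Field k]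

/-- Evaluation of a formal linear combination. -/
def ev (f : ℕ → k) (L : LC) : k := (L.map fun t => (t.2 : k) * f t.1).sum

@[simp] lemma ev_nil (f : ℕ → k) : ev f [] = 0 := rfl

@[simp] lemma ev_cons (f : ℕ → k) (t : ℕ × ℕ) (L : LC) :
    ev f (t :: L) = (t.2 : k) * f t.1 + ev f L := by simp [ev]

lemma ev_append (f : ℕ → k) (L L' : LC) : ev f (L ++ L') = ev f L + ev f L' := by
  simp [ev]

lemma ev_flatMap {α : Type*} (f : ℕ → k) (l : List α) (G : α → LC) :
    ev f (l.flatMap G) = (l.map fun a => ev f (G a)).sum := by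
  induction l with
  | nil => rfl
  | cons a l ih => simp [ev_append, ih]

/-- Scale a formal linear combination. -/
def scl (a : ℕ) (L : LC) : LC := L.map fun t => (t.1, a * t.2)

lemma ev_scl (f : ℕ → k) (a : ℕ) (L : LC) : ev f (scl a L) = (a : k) * ev f L := by
  induction L with
  | nil => simp [scl]
  | cons t L ih =>
    have : scl a (t :: L) = (t.1, a * t.2) :: scl a L := rfl
    rw [this, ev_cons, ih, ev_cons]; push_cast; ring

/-- Substitute `h` in a formal linear combination. -/
def sub (h : ℕ → LC) (L : LC) : LC := L.flatMap fun t => scl t.2 (h t.1)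

lemma ev_sub (f : ℕ → k) (h : ℕ → LC) (L : LC) :
    ev f (sub h L) = ev (fun x => ev f (h x)) L := by
  rw [sub, ev_flatMap]; simp only [ev_scl]; rfl

/-- Insert a term in a sorted linear combination. -/
def insT (x a : ℕ) : LC → LC
  | [] => [(x, a)]
  | t :: L => bif Nat.beq x t.1 then (t.1, (a + t.2) % 3) :: L else
      bif Nat.blt x t.1 then (x, a) :: t :: L else t :: insT x a L

/-- Collect the terms. -/
def nrm : LC → LC
  | [] => []
  | t :: L => insT t.1 (t.2 % 3) (nrm L)

/-- Drop the zero terms. -/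
def dropZ : LC → LC
  | [] => []
  | t :: L => bif Nat.beq t.2 0 then dropZ L else t :: dropZ L

lemma cast_mod [CharP k 3] (a : ℕ) : ((a % 3 : ℕ) : k) = a :=
  (CharP.cast_eq_mod k 3 a).symm

lemma ev_insT [CharP k 3] (f : ℕ → k) (x a : ℕ) (L : LC) :
    ev f (insT x a L) = (a : k) * f x + ev f L := by
  induction L with
  | nil => simp [insT]
  | cons t L ih =>
    rw [insT]
    cases h : Nat.beq x t.1 with
    | true =>
      have : x = t.1 := Nat.eq_of_beq_eq_true h
      simp only [cond_true, ev_cons, cast_mod, this]; push_cast; ring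
    | false =>
      cases h' : Nat.blt x t.1 with
      | true => simp
      | false => simp [ih]; ring

lemma ev_nrm [CharP k 3] (f : ℕ → k) (L : LC) : ev f (nrm L) = ev f L := by
  induction L with
  | nil => rfl
  | cons t L ih => rw [nrm, ev_insT, ih, ev_cons, cast_mod]

lemma ev_dropZ (f : ℕ → k) (L : LC) : ev f (dropZ L) = ev f L := by
  induction L with
  | nil => rfl
  | cons t L ih =>
    rw [dropZ]
    cases h : Nat.beq t.2 0 with
    | true =>
      have : t.2 = 0 := Nat.eq_of_beq_eq_true h
      simp [ih, this]
    | false => simp [ih]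

lemma cast_sg [CharP k 3] (i : ℕ) : (sg i : k) = (-1) ^ i := by
  have h3 : (3 : k) = 0 := by exact_mod_cast CharP.cast_eq_zero k 3
  have h2 : (2 : k) = -1 := by linear_combination h3
  rcases Nat.even_or_odd i with h | h
  · have : i % 2 = 0 := Nat.even_iff.mp h
    simp [sg, this, h.neg_one_pow]
  · have : i % 2 = 1 := Nat.odd_iff.mp h
    have h' : sg i = 2 := by rw [sg, this]; rfl
    rw [h', h.neg_one_pow]; exact_mod_cast h2

end ev

section tup
variable {k : Type*} [Field k]
variable {g : Type*} [LieRing g] [LieAlgebra k g]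
variable {M : Type*} [AddCommGroup M] [Module k M] [LieRingModule g M] [LieModule k g M]
variable (b : Module.Basis (Fin 8) k g) (m : Module.Basis (Fin 7) k M)

/-- Basis vectors indexed by natural numbers. -/
noncomputable def bb (i : ℕ) : g := if h : i < 8 then b ⟨i, h⟩ else 0

/-- Coordinates indexed by natural numbers. -/
noncomputable def mc (l : ℕ) : M →ₗ[k] k := if h : l < 7 then m.coord ⟨l, h⟩ else 0

/-- Tuple of basis vectors given by a list. -/
noncomputable def tup (n : ℕ) (L : List ℕ) : Fin n → g := fun i => bb b (L.getD i 0)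

lemma tup_cons (n : ℕ) (p : ℕ) (L : List ℕ) :
    tup b (n + 1) (p :: L) = Fin.cons (bb b p) (tup b n L) := by
  ext i
  refine Fin.cases ?_ (fun j => ?_) i <;> simp [tup]

lemma tup_eraseIdx (n : ℕ) (L : List ℕ) (i : Fin (n + 1)) :
    (fun l => tup b (n + 1) L (i.succAbove l)) = tup b n (L.eraseIdx i) := by
  ext l
  simp only [tup]
  congr 1
  simp only [List.getD_eq_getElem?_getD, List.getElem?_eraseIdx]
  congr 1
  rcases lt_or_ge l.castSucc i with h | h
  · rw [Fin.succAbove_of_castSucc_lt _ _ h]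
    have : (l : ℕ) < i := h
    simp [this]
  · rw [Fin.succAbove_of_le_castSucc _ _ h]
    have : ¬ (l : ℕ) < i := not_lt.mpr h
    simp [this]

lemma map_tup_swap (n : ℕ) (ψ : g [⋀^Fin n]→ₗ[k] M) (pre L : List ℕ) (p q : ℕ)
    (hn : n = pre.length + (L.length + 2)) :
    ψ (tup b n (pre ++ p :: q :: L)) = - ψ (tup b n (pre ++ q :: p :: L)) := by
  have hi : pre.length < n := by omega
  have hj : pre.length + 1 < n := by omega
  have hij : (⟨pre.length, hi⟩ : Fin n) ≠ ⟨pre.length + 1, hj⟩ := by simp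
  rw [← AlternatingMap.map_swap ψ _ hij]
  congr 1
  ext l
  simp only [Function.comp, tup]
  congr 1
  by_cases h1 : l = ⟨pre.length, hi⟩
  · subst h1; simp [Equiv.swap_apply_left]
  by_cases h2 : l = ⟨pre.length + 1, hj⟩
  · subst h2; simp [Equiv.swap_apply_right]
  rw [Equiv.swap_apply_of_ne_of_ne h1 h2]
  rcases lt_or_ge (l : ℕ) pre.length with h | h
  · rw [List.getD_append _ _ _ _ h, List.getD_append _ _ _ _ h]
  · rw [List.getD_append_right _ _ _ _ h, List.getD_append_right _ _ _ _ h]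
    have h1' : (l : ℕ) ≠ pre.length := fun h => h1 (Fin.ext h)
    have h2' : (l : ℕ) ≠ pre.length + 1 := fun h => h2 (Fin.ext h)
    obtain ⟨r, hr⟩ : ∃ r, (l : ℕ) - pre.length = r + 2 := ⟨l - pre.length - 2, by omega⟩
    rw [hr]; rfl

lemma map_tup_dup (n : ℕ) (ψ : g [⋀^Fin n]→ₗ[k] M) (pre L : List ℕ) (p : ℕ)
    (hn : n = pre.length + (L.length + 2)) :
    ψ (tup b n (pre ++ p :: p :: L)) = 0 := by
  have hi : pre.length < n := by omega
  have hj : pre.length + 1 < n := by omega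
  have hij : (⟨pre.length, hi⟩ : Fin n) ≠ ⟨pre.length + 1, hj⟩ := by simp
  refine ψ.map_eq_zero_of_eq _ ?_ hij
  simp [tup]

lemma map_tup_ins [CharP k 3] (n : ℕ) (ψ : g [⋀^Fin n]→ₗ[k] M) (p : ℕ) (L : List ℕ) :
    ∀ (pre : List ℕ), n = pre.length + (L.length + 1) →
    ψ (tup b n (pre ++ p :: L)) = ((ins p L).1 : k) • ψ (tup b n (pre ++ (ins p L).2)) := by
  have h3 : (3 : k) = 0 := by exact_mod_cast CharP.cast_eq_zero k 3
  have h2 : (2 : k) = -1 := by linear_combination h3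
  induction L with
  | nil => intro pre _; simp [ins]
  | cons q L ih =>
    intro pre hn
    rw [ins]
    cases h : Nat.blt p q with
    | true => simp
    | false =>
      cases h' : Nat.beq p q with
      | true =>
        have : p = q := Nat.eq_of_beq_eq_true h'
        subst this
        simp only [cond_false, cond_true, Nat.cast_zero, zero_smul]
        exact map_tup_dup b n ψ pre L p hn
      | false =>
        simp only [cond_false]
        rw [map_tup_swap b n ψ pre L p q hn]
        have := ih (pre ++ [q]) (by simp; simp at hn; omega)
        rw [List.append_assoc, List.append_assoc] at this
        simp only [List.singleton_append] at this
        rw [this, cast_mod]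
        push_cast
        rw [h2]
        simp

end tup

/-- Structure constants of `sl₃` (mod 3) in the basis
`E₁₂, E₂₃, E₁₃, E₂₁, E₃₂, E₃₁, diag(1,-1,0), 1`. -/
def scT : List (List LC) :=
  [[[], [(2, 1)], [], [(6, 1)], [], [(4, 2)], [(0, 1)], []],
   [[(2, 2)], [], [], [], [(6, 1), (7, 2)], [(3, 1)], [(1, 1)], []],
   [[], [], [], [(1, 2)], [(0, 1)], [(6, 2), (7, 2)], [(2, 2)], []],
   [[(6, 2)], [], [(1, 1)], [], [(5, 2)], [], [(3, 2)], []],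
   [[], [(6, 2), (7, 1)], [(0, 2)], [(5, 1)], [], [], [(4, 2)], []],
   [[(4, 1)], [(3, 2)], [(6, 1), (7, 1)], [], [], [], [(5, 1)], []],
   [[(0, 2)], [(1, 2)], [(2, 1)], [(3, 1)], [(4, 1)], [(5, 2)], [], []],
   [[], [], [], [], [], [], [], []]]

/-- Matrix entries of the action on the quotient module (mod 3). -/
def acT : List (List LC) :=
  [[[(6, 1)], [], [(1, 1)], [], [(5, 2)], [], [(3, 1)]],
   [[], [(6, 1)], [(0, 2)], [(5, 1)], [], [], [(4, 1)]],
   [[(4, 1)], [(3, 2)], [(6, 2)], [], [], [], [(5, 2)]],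
   [[], [(2, 1)], [], [(6, 2)], [], [(4, 2)], [(0, 2)]],
   [[(2, 2)], [], [], [], [(6, 2)], [(3, 1)], [(1, 2)]],
   [[], [], [], [(1, 2)], [(0, 1)], [(6, 1)], [(2, 1)]],
   [[(0, 2)], [(1, 2)], [(2, 1)], [(3, 1)], [(4, 1)], [(5, 2)], []],
   [[], [], [], [], [], [], []]]

/-- Structure constants: expansion of the bracket of two basis vectors. -/
def sc (i j : ℕ) : LC := (scT.getD i []).getD j []

/-- The `l`-th coordinate of the action of the `i`-th basis vector. -/
def ac (i l : ℕ) : LC := (acT.getD i []).getD l []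

/-- Encode a list of small numbers as a bit mask. -/
def enc : List ℕ → ℕ
  | [] => 0
  | x :: L => 2 ^ x + enc L

/-- Decode a bit mask. -/
def bits (c : ℕ) : List ℕ := [0, 1, 2, 3, 4, 5, 6, 7].filter fun i => Nat.beq (c / 2 ^ i % 2) 1

/-- Bracket part of the differential. -/
def dA (T : List ℕ) : List (List ℕ × ℕ) :=
  (List.range T.length).flatMap fun i => (List.range T.length).flatMap fun j =>
    bif Nat.blt i j then
      (sc (T.getD i 0) (T.getD j 0)).map fun pc =>
        ((ins pc.1 ((T.eraseIdx i).eraseIdx (j - 1))).2,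
          pc.2 * (ins pc.1 ((T.eraseIdx i).eraseIdx (j - 1))).1 * sg (i + j))
    else []

/-- Action part of the differential. -/
def dB (T : List ℕ) (l : ℕ) : LC :=
  (List.range T.length).flatMap fun i =>
    (ac (T.getD i 0) l).map fun qc => (8 * enc (T.eraseIdx i) + qc.1, qc.2 * sg i)

/-- The row of the matrix of the differential. -/
def dRow (T : List ℕ) (l : ℕ) : LC :=
  dropZ ((dA T).map (fun t => (8 * enc t.1 + l, t.2)) ++ dB T l)

/-- Equality of lists of natural numbers. -/
def leq : List ℕ → List ℕ → Bool
  | [], [] => true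
  | x :: L, y :: L' => Nat.beq x y && leq L L'
  | _, _ => false

lemma leq_eq : ∀ {L L' : List ℕ}, leq L L' = true → L = L'
  | [], [], _ => rfl
  | x :: L, y :: L', h => by
    simp only [leq, Bool.and_eq_true] at h
    rw [Nat.eq_of_beq_eq_true h.1, leq_eq h.2]
  | [], _ :: _, h => by simp [leq] at h
  | _ :: _, [], h => by simp [leq] at h

/-- All lists occurring in the row are correctly encoded. -/
def okD (T : List ℕ) : Bool :=
  (dA T).all (fun t => leq (bits (enc t.1)) t.1) &&
    (List.range T.length).all fun i => leq (bits (enc (T.eraseIdx i))) (T.eraseIdx i)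

lemma list_range_sum {A : Type*} [AddCommMonoid A] (N : ℕ) (f : ℕ → A) :
    ((List.range N).map f).sum = ∑ i : Fin N, f i := by
  rw [← Finset.sum_range]
  induction N with
  | zero => simp
  | succ N ih => rw [List.range_succ, List.map_append, List.sum_append, ih, Finset.sum_range_succ]; simp

lemma sum_flatMap' {A B C : Type*} [AddCommMonoid A] (l : List B) (G : B → List C) (f : C → A) :
    ((l.flatMap G).map f).sum = (l.map fun a => ((G a).map f).sum).sum := by
  induction l with
  | nil => rfl
  | cons a l ih => simp [ih]

section diff
variable {k : Type*} [Field k]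
variable {g : Type*} [LieRing g] [LieAlgebra k g]
variable {M : Type*} [AddCommGroup M] [Module k M] [LieRingModule g M] [LieModule k g M]
variable (b : Module.Basis (Fin 8) k g) (m : Module.Basis (Fin 7) k M)

/-- Coordinates of a cochain. -/
noncomputable def F (n : ℕ) (ψ : g [⋀^Fin n]→ₗ[k] M) (c : ℕ) : k :=
  mc m (c % 8) (ψ (tup b n (bits (c / 8))))

lemma F_enc (n : ℕ) (ψ : g [⋀^Fin n]→ₗ[k] M) (R : List ℕ) (l : ℕ) (hl : l < 8)
    (hR : leq (bits (enc R)) R = true) :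
    F b m n ψ (8 * enc R + l) = mc m l (ψ (tup b n R)) := by
  rw [F, show (8 * enc R + l) % 8 = l by omega, show (8 * enc R + l) / 8 = enc R by omega,
    leq_eq hR]

lemma map_cons_list_sum (n : ℕ) (ψ : g [⋀^Fin (n + 1)]→ₗ[k] M) (L : LC) (w : Fin n → g) :
    ψ (Fin.cons ((L.map fun pc => (pc.2 : k) • bb b pc.1).sum) w) =
      (L.map fun pc => (pc.2 : k) • ψ (Fin.cons (bb b pc.1) w)).sum := by
  have h : ∀ x, ψ (Fin.cons x w) = (AlternatingMap.curryLeft ψ x) w := fun x => rfl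
  simp only [h]
  induction L with
  | nil => simp
  | cons t L ih => simpa using ih

lemma ac_lt : ∀ i < 8, ∀ l < 7, ∀ qc ∈ ac i l, qc.1 < 7 := by decide

lemma F_ceD [CharP k 3]
    (hsc : ∀ i < 8, ∀ j < 8, ⁅bb b i, bb b j⁆ = ((sc i j).map fun pc => (pc.2 : k) • bb b pc.1).sum)
    (hac : ∀ i < 8, ∀ l < 7, ∀ y : M,
    mc m l ⁅bb b i, y⁆ = ((ac i l).map fun qc => (qc.2 : k) * mc m qc.1 y).sum)
    (n : ℕ) (ψ : g [⋀^Fin (n + 1)]→ₗ[k] M) (T : List ℕ) (hT : T.length = n + 2)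
    (h8 : ∀ i, T.getD i 0 < 8) (ok : okD T = true) (l : ℕ) (hl : l < 7) :
    mc m l (ceD k g M ψ (tup b (n + 2) T)) = ev (F b m (n + 1) ψ) (dRow T l) := by
  simp only [okD, Bool.and_eq_true, List.all_eq_true] at ok
  obtain ⟨ok1, ok2⟩ := ok
  rw [dRow, ev_dropZ, ev_append, ceD, map_add]
  congr 1
  · have e1 : ev (F b m (n + 1) ψ) ((dA T).map (fun t => (8 * enc t.1 + l, t.2))) =
        ((dA T).map fun t => (t.2 : k) * mc m l (ψ (tup b (n + 1) t.1))).sum := by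
      rw [ev, List.map_map]
      congr 1
      refine List.map_congr_left fun t ht => ?_
      simp only [Function.comp]
      rw [F_enc _ _ _ _ _ _ (by omega) (ok1 t ht)]
    rw [e1, dA, hT, sum_flatMap' (A := k), list_range_sum, map_sum]
    refine Finset.sum_congr rfl fun i _ => ?_
    rw [sum_flatMap' (A := k), list_range_sum, map_sum]
    refine Finset.sum_congr rfl fun j _ => ?_
    by_cases h : i < j
    · have hb : Nat.blt i j = true := by simpa using h
      rw [dif_pos h, hb, cond_true]
      have et : (fun l => tup b (n + 2) T (i.succAbove
                ((j.pred (Fin.pos_iff_ne_zero.mp (lt_of_le_of_lt i.zero_le h))).succAbove l))) =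
          tup b n ((T.eraseIdx i).eraseIdx (j - 1)) := by
        have := tup_eraseIdx b n (T.eraseIdx i)
          (j.pred (Fin.pos_iff_ne_zero.mp (lt_of_le_of_lt i.zero_le h)))
        rw [← tup_eraseIdx b (n + 1) T i] at this
        rw [this]
        simp
      rw [et]
      have ei : ∀ i : Fin (n + 2), tup b (n + 2) T i = bb b (T.getD i 0) := fun i => rfl
      rw [ei, ei, hsc _ (h8 _) _ (h8 _), map_cons_list_sum, map_zsmul, List.map_map, map_list_sum,
        List.smul_sum, List.map_map, List.map_map]
      congr 1
      refine List.map_congr_left fun pc _ => ?_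
      simp only [Function.comp]
      have hlen : ((T.eraseIdx i).eraseIdx (j - 1)).length = n := by
        have hi := i.2
        have hj := j.2
        have hij : (i : ℕ) < j := h
        rw [List.length_eraseIdx_of_lt, List.length_eraseIdx_of_lt] <;>
          (try rw [List.length_eraseIdx_of_lt]) <;> omega
      have := map_tup_ins b (n + 1) ψ pc.1 ((T.eraseIdx i).eraseIdx (j - 1)) [] (by simp [hlen])
      simp only [List.nil_append] at this
      rw [← tup_cons, this]
      push_cast
      rw [cast_sg]
      simp only [map_smul, smul_eq_mul, zsmul_eq_mul]
      push_cast
      ring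
    · have hb : Nat.blt i j = false := by
        rw [← Bool.not_eq_true]; intro h'; exact h (by simpa using h')
      rw [dif_neg h, hb]
      simp
  · rw [dB, hT, ev_flatMap, list_range_sum, map_sum]
    refine Finset.sum_congr rfl fun i _ => ?_
    have ei : ∀ i : Fin (n + 2), tup b (n + 2) T i = bb b (T.getD i 0) := fun i => rfl
    rw [map_zsmul, tup_eraseIdx, ei, hac _ (h8 _) _ hl, ev, List.map_map, List.smul_sum,
      List.map_map]
    congr 1
    refine List.map_congr_left fun qc hqc => ?_
    simp only [Function.comp]
    have := ac_lt _ (h8 i) _ hl qc hqc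
    rw [F_enc _ _ _ _ _ _ (by omega) (ok2 i (by simp [hT]))]
    push_cast
    rw [cast_sg]
    simp only [zsmul_eq_mul]
    push_cast
    ring

end diff

section alt
variable {k : Type*} [Field k]
variable {g : Type*} [LieRing g] [LieAlgebra k g]
variable {M : Type*} [AddCommGroup M] [Module k M] [LieRingModule g M] [LieModule k g M]

/-- The action part of the differential, curried. -/
noncomputable def actC {n : ℕ} (φ : g [⋀^Fin n]→ₗ[k] M) : g →ₗ[k] g [⋀^Fin n]→ₗ[k] M where
  toFun x := (LieModule.toEnd k g M x).compAlternatingMap φ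
  map_add' x y := by ext v; simp
  map_smul' c x := by ext v; simp

/-- The bracket part of the differential, curried twice. -/
noncomputable def brC {n : ℕ} (φ : g [⋀^Fin (n + 1)]→ₗ[k] M) :
    g →ₗ[k] g →ₗ[k] g [⋀^Fin n]→ₗ[k] M where
  toFun x := (AlternatingMap.curryLeft φ) ∘ₗ (LieAlgebra.ad k g x : g →ₗ[k] g)
  map_add' x y := by
    refine LinearMap.ext fun z => ?_
    simp only [LinearMap.comp_apply, LinearMap.add_apply, map_add]
  map_smul' c x := by
    refine LinearMap.ext fun z => ?_
    simp only [LinearMap.comp_apply, LinearMap.smul_apply, map_smul, RingHom.id_apply]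

lemma brC_apply {n : ℕ} (φ : g [⋀^Fin (n + 1)]→ₗ[k] M) (x y : g) (v : Fin n → g) :
    brC φ x y v = φ (Fin.cons ⁅x, y⁆ v) := rfl

lemma brC_swap {n : ℕ} (φ : g [⋀^Fin (n + 1)]→ₗ[k] M) (x y : g) :
    brC φ y x = - brC φ x y := by
  have : brC φ y x = AlternatingMap.curryLeft φ ⁅y, x⁆ := rfl
  rw [this, ← lie_skew, map_neg]
  rfl

lemma ceD_alt [CharP k 3] {n : ℕ} (φ : g [⋀^Fin (n + 1)]→ₗ[k] M) :
    ∃ ω : g [⋀^Fin (n + 2)]→ₗ[k] M, ∀ v, ω v = ceD k g M φ v := by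
  have h3 : (3 : k) = 0 := by exact_mod_cast CharP.cast_eq_zero k 3
  have hM : ∀ y : M, y + y = - y := by
    intro y
    have : (3 : k) • y = 0 := by rw [h3, zero_smul]
    rw [show (3 : k) = 1 + 1 + 1 by norm_num, add_smul, add_smul, one_smul] at this
    exact eq_neg_of_add_eq_zero_left this
  refine ⟨AlternatingMap.alternatizeUncurryFin
    (AlternatingMap.alternatizeUncurryFinLM ∘ₗ brC φ) +
    AlternatingMap.alternatizeUncurryFin (actC φ), fun v => ?_⟩
  rw [AlternatingMap.add_apply, ceD]
  congr 1
  · rw [AlternatingMap.alternatizeUncurryFin_alternatizeUncurryFinLM_comp_apply,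
      Fin.sum_univ_castSucc (n := n + 1)]
    have hlast : ∀ j : Fin (n + 2), ¬ Fin.last (n + 1) < j := fun j => not_lt.mpr (Fin.le_last j)
    rw [Finset.sum_eq_zero (s := Finset.univ) (f := fun j : Fin (n + 2) =>
      if h : Fin.last (n + 1) < j then _ else (0 : M)) (fun j _ => dif_neg (hlast j)), add_zero]
    refine Finset.sum_congr rfl fun i _ => ?_
    rw [Fin.sum_univ_succ, dif_neg (by simp), zero_add]
    rw [← Finset.sum_filter_add_sum_filter_not Finset.univ (fun j => i ≤ j)
      (fun j : Fin (n + 1) => if h : i.castSucc < j.succ then _ else (0 : M))]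
    rw [Finset.sum_eq_zero (s := Finset.univ.filter fun j => ¬ i ≤ j), add_zero]
    · refine Finset.sum_congr ?_ fun j hj => ?_
      · ext j; simp
      · have hj' : i ≤ j := by simpa using hj
        have hlt : i.castSucc < j.succ := by
          rw [Fin.lt_def]; simp; omega
        rw [dif_pos hlt, brC_swap φ (v i.castSucc) (v j.succ), AlternatingMap.neg_apply, sub_neg_eq_add, hM]
        rw [brC_apply]
        simp only [Fin.pred_succ, Fin.val_castSucc, Fin.val_succ]
        rw [← add_assoc, pow_succ, mul_neg_one, neg_smul, smul_neg]
        rfl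
    · intro j hj
      have hj' : j < i := by simpa using hj
      rw [dif_neg]
      rw [Fin.lt_def]; simp; omega
  · rw [AlternatingMap.alternatizeUncurryFin_apply]
    rfl

variable (b : Module.Basis (Fin 8) k g)

lemma emb_tup {n : ℕ} (f : Fin n ↪o Fin 8) :
    (b ∘ f : Fin n → g) = tup b n (List.ofFn fun i => (f i : ℕ)) := by
  ext i
  simp [tup, bb]

lemma exists_alt (n : ℕ) (val : List ℕ → M) :
    ∃ φ : g [⋀^Fin n]→ₗ[k] M, ∀ L : List ℕ, L.length = n → L.Pairwise (· < ·) →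
      (∀ x ∈ L, x < 8) → φ (tup b n L) = val L := by
  refine ⟨exteriorPower.alternatingMapLinearEquiv.symm ((b.exteriorPower n).constr k
    fun s => val (List.ofFn fun i => ((Set.powersetCard.ofFinEmbEquiv.symm s) i : ℕ))), ?_⟩
  intro L hL hp h8
  subst hL
  let f : Fin L.length ↪o Fin 8 := OrderEmbedding.ofStrictMono
    (fun i => ⟨L[i], h8 _ (List.getElem_mem _)⟩)
    (fun i j hij => by
      rw [Fin.lt_def]
      exact List.pairwise_iff_getElem.mp hp i j i.2 j.2 hij)
  have hf : (List.ofFn fun i => (f i : ℕ)) = L := by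
    simp [f]
  have e : exteriorPower.ιMulti k L.length (tup b L.length L) =
      b.exteriorPower L.length (Set.powersetCard.ofFinEmbEquiv f) := by
    rw [exteriorPower.basis_apply, exteriorPower.ιMulti_family, Equiv.symm_apply_apply,
      emb_tup, hf]
  rw [exteriorPower.alternatingMapLinearEquiv_symm_apply, LinearMap.compAlternatingMap_apply, e,
    Module.Basis.constr_basis, Equiv.symm_apply_apply, hf]

lemma alt_ext {n : ℕ} {φ ψ : g [⋀^Fin n]→ₗ[k] M}
    (h : ∀ f : Fin n ↪o Fin 8, φ (b ∘ f) = ψ (b ∘ f)) : φ = ψ := by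
  apply exteriorPower.alternatingMapLinearEquiv.injective
  refine (b.exteriorPower n).ext fun s => ?_
  rw [exteriorPower.basis_apply, exteriorPower.ιMulti_family,
    exteriorPower.alternatingMapLinearEquiv_apply_ιMulti,
    exteriorPower.alternatingMapLinearEquiv_apply_ιMulti]
  exact h _

end alt

lemma bits_enc_sublists : ∀ L ∈ (List.range 8).sublists, bits (enc L) = L ∧ enc L < 256 := by
  decide +kernel

lemma bits_enc {L : List ℕ} (hp : L.Pairwise (· < ·)) (h8 : ∀ x ∈ L, x < 8) :
    bits (enc L) = L ∧ enc L < 256 := by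
  apply bits_enc_sublists
  rw [List.mem_sublists]
  have hn : L.Nodup := hp.imp (fun h => ne_of_lt h)
  have hs : L.Subperm (List.range 8) := List.subperm_of_subset hn (fun x hx => by simpa using h8 x hx)
  exact List.sublist_of_subperm_of_pairwise hs hp (List.pairwise_lt_range)

lemma bits_lt (c : ℕ) : ∀ x ∈ bits c, x < 8 := by
  intro x hx
  have := List.mem_of_mem_filter hx
  simp only [List.mem_cons, List.not_mem_nil, or_false] at this
  omega

lemma bits_pairwise (c : ℕ) : (bits c).Pairwise (· < ·) := by
  apply List.Pairwise.filter
  decide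

lemma bits_getD (c i : ℕ) : (bits c).getD i 0 < 8 := by
  rcases lt_or_ge i (bits c).length with h | h
  · rw [List.getD_eq_getElem _ _ h]; exact bits_lt c _ (List.getElem_mem _)
  · rw [List.getD_eq_default _ _ h]; norm_num

/-- Row of the differential, by code. -/
def rowOf (c : ℕ) : LC := dRow (bits (c / 8)) (c % 8)

/-- Test that a linear combination is a single key with coefficient one. -/
def isOne (c : ℕ) : LC → Bool
  | [t] => Nat.beq t.1 c && Nat.beq t.2 1
  | _ => false

/-- Valid code in degree `n`. -/
def okC (n x : ℕ) : Bool :=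
  Nat.beq (bits (x / 8)).length n && Nat.beq (enc (bits (x / 8))) (x / 8) && Nat.blt (x % 8) 7

/-- Check of one row of the homotopy identity. -/
def chk1 (n : ℕ) (h1 h2 : ℕ → LC) (c : ℕ) : Bool :=
  (rowOf c).all (fun x => okC (n + 1) x.1) && (h2 c).all (fun x => okC (n + 3) x.1) &&
    isOne c (dropZ (nrm (sub h1 (rowOf c) ++ sub rowOf (h2 c))))

/-- Check of well-formedness of the differential in a degree. -/
def chkD (n : ℕ) : Bool :=
  (List.range 256).all fun c => !(Nat.beq (bits c).length n) || okD (bits c)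

/-- Check of the homotopy identity in a degree. -/
def chk (n : ℕ) (h1 h2 : ℕ → LC) : Bool :=
  (List.range 256).all fun c => !(Nat.beq (bits c).length (n + 2)) ||
    (List.range 7).all fun l => chk1 n h1 h2 (8 * c + l)

lemma isOne_eq {c : ℕ} {L : LC} (h : isOne c L = true) : L = [(c, 1)] := by
  match L, h with
  | [t], h =>
    simp only [isOne, Bool.and_eq_true] at h
    rw [← Nat.eq_of_beq_eq_true h.1, ← Nat.eq_of_beq_eq_true h.2]

lemma chkD_ok {n : ℕ} (h : chkD n = true) {c : ℕ} (hc : c < 256) (hl : (bits c).length = n) :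
    okD (bits c) = true := by
  have := List.all_eq_true.mp h c (List.mem_range.mpr hc)
  have e : Nat.beq (bits c).length n = true := by rw [hl]; exact Nat.beq_refl n
  rw [e] at this
  simpa using this

lemma okC_spec {n x : ℕ} (h : okC n x = true) :
    (bits (x / 8)).length = n ∧ enc (bits (x / 8)) = x / 8 ∧ x % 8 < 7 := by
  simp only [okC, Bool.and_eq_true] at h
  exact ⟨Nat.eq_of_beq_eq_true h.1.1, Nat.eq_of_beq_eq_true h.1.2, by simpa using h.2⟩

lemma ev_congr {k : Type*} [Field k] {f f' : ℕ → k} {L : LC} (h : ∀ x ∈ L, f x.1 = f' x.1) :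
    ev f L = ev f' L := by
  rw [ev, ev]; congr 1
  exact List.map_congr_left fun x hx => by rw [h x hx]

section main
variable {k : Type*} [Field k]
variable {g : Type*} [LieRing g] [LieAlgebra k g]
variable {M : Type*} [AddCommGroup M] [Module k M] [LieRingModule g M] [LieModule k g M]
variable (b : Module.Basis (Fin 8) k g) (m : Module.Basis (Fin 7) k M)

theorem exact_of_chk [CharP k 3]
    (hsc : ∀ i < 8, ∀ j < 8,
      ⁅bb b i, bb b j⁆ = ((sc i j).map fun pc => (pc.2 : k) • bb b pc.1).sum)
    (hac : ∀ i < 8, ∀ l < 7, ∀ y : M,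
      mc m l ⁅bb b i, y⁆ = ((ac i l).map fun qc => (qc.2 : k) * mc m qc.1 y).sum)
    (n : ℕ) (h1 h2 : ℕ → LC) (hD1 : chkD (n + 2) = true) (hD2 : chkD (n + 3) = true)
    (hc : chk n h1 h2 = true)
    (ψ : g [⋀^Fin (n + 2)]→ₗ[k] M) (hψ : ∀ v, ceD k g M ψ v = 0) :
    ∃ φ : g [⋀^Fin (n + 1)]→ₗ[k] M, ∀ v, ψ v = ceD k g M φ v := by
  obtain ⟨φ, hφ⟩ := exists_alt (M := M) b (n + 1) fun S =>
    ∑ l : Fin 7, ev (F b m (n + 2) ψ) (h1 (8 * enc S + l)) • m l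
  obtain ⟨ω, hω⟩ := ceD_alt φ
  have hFφ : ∀ x, okC (n + 1) x = true →
      F b m (n + 1) φ x = ev (F b m (n + 2) ψ) (h1 x) := by
    intro x hx
    obtain ⟨hx1, hx2, hx3⟩ := okC_spec hx
    rw [F, hφ _ hx1 (bits_pairwise _) (bits_lt _), hx2, mc, dif_pos hx3]
    rw [map_sum, Finset.sum_eq_single ⟨x % 8, hx3⟩]
    · simp [Nat.div_add_mod]
    · intro l _ hl
      simp [hl]
    · simp
  have hFψ : ∀ x, okC (n + 3) x = true → ev (F b m (n + 2) ψ) (rowOf x) = 0 := by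
    intro x hx
    obtain ⟨hx1, hx2, hx3⟩ := okC_spec hx
    have hlt : x / 8 < 256 := hx2 ▸ (bits_enc (bits_pairwise (x / 8)) (bits_lt _)).2
    rw [rowOf, ← F_ceD b m hsc hac (n + 1) ψ (bits (x / 8)) hx1 (bits_getD _)
      (chkD_ok hD2 hlt hx1) _ hx3, hψ, map_zero]
  have key : ψ = ω := by
    refine alt_ext b fun f => ?_
    rw [emb_tup]
    have hp : (List.ofFn fun i => (f i : ℕ)).Pairwise (· < ·) := by
      rw [List.pairwise_ofFn]
      intro i j hij
      exact f.strictMono hij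
    have h8 : ∀ x ∈ (List.ofFn fun i => (f i : ℕ)), x < 8 := by
      intro x hx
      obtain ⟨i, rfl⟩ := List.mem_ofFn.mp hx
      exact (f i).2
    have hlen : (List.ofFn fun i => (f i : ℕ)).length = n + 2 := by simp
    generalize (List.ofFn fun i => (f i : ℕ)) = T at hp h8 hlen
    obtain ⟨hbe, hlt⟩ := bits_enc hp h8
    rw [← hbe] at hlen ⊢
    generalize enc T = c at hlen hlt
    refine m.ext_elem fun l => ?_
    have hl := l.2
    have hmc : ∀ y : M, m.repr y l = mc m l y := by
      intro y; rw [mc, dif_pos hl]; rfl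
    have hd : (8 * c + l) / 8 = c := by omega
    have hr : (8 * c + l) % 8 = l := by omega
    have hrow : rowOf (8 * c + l) = dRow (bits c) l := by rw [rowOf, hd, hr]
    rw [hmc, hmc, hω, F_ceD b m hsc hac n φ (bits c) hlen (bits_getD _)
      (chkD_ok hD1 hlt hlen) _ hl, ← hrow]
    have hch : chk1 n h1 h2 (8 * c + l) = true := by
      have := List.all_eq_true.mp hc c (List.mem_range.mpr hlt)
      have e : Nat.beq (bits c).length (n + 2) = true := by rw [hlen]; exact Nat.beq_refl _
      rw [e] at this
      rw [Bool.not_true, Bool.false_or] at this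
      exact List.all_eq_true.mp this l (List.mem_range.mpr hl)
    simp only [chk1, Bool.and_eq_true] at hch
    obtain ⟨⟨ha1, ha2⟩, ha3⟩ := hch
    have hev := congrArg (ev (F b m (n + 2) ψ)) (isOne_eq ha3)
    rw [ev_dropZ, ev_nrm, ev_append, ev_sub, ev_sub,
      ev_congr (L := h2 _) (f' := fun _ => 0)
        (fun x hx => hFψ x.1 (List.all_eq_true.mp ha2 x hx)),
      ev_congr (L := rowOf _) (f' := F b m (n + 1) φ)
        (fun x hx => (hFφ x.1 (List.all_eq_true.mp ha1 x hx)).symm)] at hev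
    rw [show ev (fun _ => (0 : k)) (h2 (8 * c + l)) = 0 by simp [ev], add_zero] at hev
    rw [hev]
    simp [F, hd, hr]
  exact ⟨φ, fun v => by rw [key, hω]⟩

end main

/-- Weights of the basis vectors under the sixth basis vector. -/
def wts (i : ℕ) : ℕ := [2, 2, 1, 1, 1, 2, 0, 0].getD i 0

/-- Weight of a coordinate of a cochain. -/
def lamb (x : ℕ) : ℕ := (wts (x % 8) + 2 * ((bits (x / 8)).map wts).sum) % 3

/-- Table lookup. -/
def look (x : ℕ) : List (ℕ × LC) → LC
  | [] => []
  | t :: L => bif Nat.beq x t.1 then t.2 else look x L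

/-- Cartan homotopy in nonzero weight, given by a table in weight zero. -/
def cart (tb : List (ℕ × LC)) (x : ℕ) : LC :=
  bif Nat.beq (lamb x) 0 then look x tb else
    dropZ [(8 * enc (ins 6 (bits (x / 8))).2 + x % 8, lamb x * (ins 6 (bits (x / 8))).1)]

/-- Weight zero homotopy from degree 2 to degree 1. -/
def tabA2 : List (ℕ × LC) :=
  [(8, [(97, 1), (197, 2), (268, 2)]), (9, [(142, 1)]), (21, [(54, 1)]), (35, [(27, 2)]),
   (66, [(192, 1)]), (67, [(97, 2)]), (68, [(96, 1)]), (130, [(193, 1)]),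
   (132, [(197, 2), (275, 1)]), (261, [(97, 2), (275, 1)]), (518, [(579, 2)]),
   (1030, [(1091, 2)])]

/-- Weight zero homotopy from degree 3 to degree 2. -/
def tabB2 : List (ℕ × LC) :=
  [(26, [(106, 2), (333, 1), (609, 1), (787, 2)]), (28, [(56, 1)]), (46, [(57, 2)]),
   (78, [(204, 1), (333, 2), (709, 1)]), (86, [(114, 1)]), (101, [(115, 1)]), (150, [(211, 1)]),
   (160, [(296, 1), (355, 2), (590, 1), (1102, 1), (1797, 1)]), (161, [(170, 1)]),
   (165, [(57, 1), (172, 2)]), (266, [(392, 1), (451, 1)]), (267, [(397, 2)]),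
   (274, [(337, 2), (452, 1)]), (276, [(114, 2), (341, 1)]), (294, [(355, 1)]),
   (326, [(452, 1)]), (390, [(451, 2)]), (520, [(590, 1)]),
   (521, [(203, 2), (397, 1), (779, 1)]), (525, [(57, 2), (107, 1), (539, 2)]),
   (528, [(88, 2), (114, 1)]), (529, [(204, 1), (333, 1), (709, 1), (787, 1)]),
   (533, [(56, 1), (108, 1), (115, 1), (566, 1)]),
   (546, [(204, 1), (333, 1), (609, 2), (709, 1), (787, 1)]), (547, [(57, 1), (107, 2)]),
   (548, [(56, 2), (108, 2), (115, 2)]), (578, [(328, 2), (452, 1), (786, 2)]),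
   (580, [(88, 1), (114, 2), (608, 1)]), (642, [(329, 2), (392, 2), (451, 2), (705, 1)]),
   (643, [(203, 1), (397, 2)]), (644, [(204, 2), (333, 2), (709, 1)]),
   (768, [(328, 1), (452, 2)]), (769, [(329, 1), (392, 1), (451, 1)]),
   (773, [(204, 2), (333, 2), (709, 2)]), (1032, [(1102, 1), (1797, 1)]),
   (1033, [(153, 2), (170, 2), (203, 2), (397, 1), (779, 1)]),
   (1037, [(107, 1), (172, 2), (179, 2), (1051, 2)]), (1040, [(88, 1), (304, 2), (341, 2)]),
   (1041, [(204, 2), (305, 2), (333, 2), (355, 1), (709, 2), (787, 2)]),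
   (1045, [(56, 2), (108, 2), (115, 1), (309, 2), (566, 2)]),
   (1058, [(204, 2), (305, 2), (333, 2), (355, 1), (709, 2), (787, 2), (1121, 2)]),
   (1059, [(107, 2), (172, 1), (179, 1)]),
   (1060, [(56, 1), (108, 1), (115, 2), (309, 1), (566, 1), (1052, 2)]),
   (1090, [(328, 2), (337, 1), (400, 1), (1298, 2)]),
   (1092, [(88, 2), (304, 1), (341, 1), (1300, 2)]),
   (1154, [(329, 2), (392, 2), (401, 1), (1217, 1)]),
   (1155, [(153, 1), (170, 1), (203, 1), (397, 2), (779, 2), (1291, 1)]),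
   (1156, [(204, 1), (305, 1), (333, 1), (355, 2), (709, 1), (787, 1), (1221, 2), (1299, 1)]),
   (1280, [(328, 1), (337, 2), (400, 2)]), (1281, [(329, 1), (392, 1), (401, 2)]),
   (1285, [(204, 1), (305, 1), (333, 1), (355, 2), (709, 1), (787, 1), (1299, 1)]),
   (1542, [(1797, 1)])]

/-- Weight zero homotopy from degree 6 to degree 5. -/
def tabA6 : List (ℕ × LC) :=
  [(377, [(510, 2), (762, 2), (889, 1), (952, 2), (1274, 2), (1401, 2), (1464, 2), (1501, 1), (1850, 1), (1883, 2)]),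
   (734, [(989, 1), (1501, 2), (1523, 2)]), (744, [(762, 1), (989, 1), (1501, 2), (1523, 2)]),
   (757, [(764, 2)]), (827, [(763, 2)]), (858, [(984, 1)]),
   (878, [(762, 2), (989, 2), (1004, 1), (1501, 1), (1523, 1)]), (886, [(1012, 1), (1524, 2)]),
   (922, [(985, 1)]),
   (950, [(762, 2), (889, 2), (952, 1), (989, 2), (1004, 2), (1777, 2), (1850, 1), (1948, 2), (2021, 2)]),
   (1150, [(764, 2), (893, 2), (1276, 1), (1405, 2), (1852, 2)]), (1256, [(1274, 1)]),
   (1261, [(1275, 2)]), (1371, [(1523, 1)]),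
   (1390, [(1274, 2), (1401, 2), (1464, 2), (1523, 2), (1777, 2), (1850, 2), (1883, 2), (1948, 2), (2021, 2)]),
   (1454, [(953, 1), (1465, 2)]), (1486, [(1497, 1), (1514, 2), (1946, 1)]),
   (1494, [(1522, 1), (1882, 1)]),
   (1593, [(763, 2), (957, 1), (1275, 2), (1469, 1), (1851, 1)]),
   (1624, [(888, 2), (1012, 1), (1524, 2)]),
   (1625, [(762, 1), (889, 2), (989, 1), (1004, 2), (1501, 2), (1523, 2)]),
   (1629, [(764, 2), (893, 2)]), (1650, [(1400, 2), (1776, 1)]),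
   (1651, [(764, 2), (893, 2), (1662, 1)]),
   (1688, [(762, 2), (889, 1), (989, 2), (1004, 1), (1274, 2), (1464, 2), (1501, 2), (1523, 2), (1777, 1), (1850, 2), (1948, 1), (2021, 1)]),
   (1693, [(763, 2), (957, 1), (1275, 1), (1469, 2)]), (1706, [(953, 1), (1003, 2), (1769, 1)]),
   (1708, [(1275, 1), (1469, 2), (1773, 2)]),
   (1716, [(764, 2), (893, 2), (1276, 2), (1405, 2), (1852, 2)]), (1738, [(985, 1), (1002, 1)]),
   (1739, [(1003, 1)]), (1746, [(984, 1), (1010, 2), (1882, 2)]),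
   (1766, [(1274, 1), (1464, 1), (1777, 2), (1850, 1), (1883, 1), (1948, 1), (2021, 1)]),
   (1822, [(762, 1), (889, 2), (989, 1), (1004, 2), (1883, 2)]),
   (1832, [(762, 2), (889, 1), (989, 2), (1004, 1), (1274, 1), (1464, 1), (1501, 2), (1523, 2), (1777, 1), (1850, 2), (1948, 1), (2021, 1)]),
   (1833, [(953, 2)]), (1837, [(763, 2), (957, 1), (1275, 2), (1469, 1)]),
   (1840, [(888, 1), (1012, 2), (1400, 1), (1524, 1)]),
   (1841, [(762, 2), (889, 1), (989, 2), (1004, 1), (1274, 2), (1464, 2), (1501, 1), (1523, 1), (1777, 2), (1850, 2), (1883, 2), (1948, 2), (2021, 2)]),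
   (1845, [(764, 2), (893, 2), (1276, 2), (1405, 2), (1852, 1)]),
   (1869, [(1501, 2), (1523, 2)]), (1877, [(888, 1), (1012, 2), (1884, 2)]),
   (1890, [(984, 1), (1010, 2), (1882, 1)]), (1892, [(1524, 1)]),
   (1933, [(953, 1), (1465, 2), (1515, 1), (1947, 2)]),
   (1936, [(1496, 2), (1522, 1), (1882, 1)]), (1937, [(1497, 1), (1514, 1), (1946, 2)]),
   (1954, [(985, 2), (1002, 2), (1497, 1), (1514, 1), (1946, 1)]),
   (1955, [(953, 2), (1003, 2), (1465, 1), (1515, 2)]),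
   (1956, [(1274, 1), (1464, 1), (1501, 1), (1523, 1), (1777, 2), (1850, 1), (1883, 1), (1948, 1), (2021, 2)]),
   (1987, [(985, 1), (1002, 1), (1998, 1)]),
   (1988, [(984, 1), (1010, 2), (1496, 1), (1522, 2), (1882, 1), (2006, 1)])]

/-- Weight zero homotopy from degree 7 to degree 6. -/
def tabB6 : List (ℕ × LC) :=
  [(1011, [(1022, 1), (1913, 2), (2013, 1)]),
   (1516, [(1534, 2), (1913, 1), (2013, 1), (2035, 1)]), (1726, [(1787, 1)]),
   (1758, [(2013, 1)]), (1768, [(1786, 1), (2013, 1)]), (1781, [(1917, 1)]),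
   (1902, [(1913, 2)]), (1910, [(2036, 1)]), (1966, [(2027, 2)]), (1974, [(2035, 2)]),
   (2016, [(2008, 2)]), (2017, [(2026, 1)])]

/-- Weight zero homotopy from degree 8 to degree 7. -/
def tabA8 : List (ℕ × LC) :=
  [(1976, [(2046, 1)])]

lemma chkD2 : chkD 2 = true := by decide +kernel

lemma chkD3 : chkD 3 = true := by decide +kernel

lemma chkD6 : chkD 6 = true := by decide +kernel

lemma chkD7 : chkD 7 = true := by decide +kernel

lemma chkD8 : chkD 8 = true := by decide +kernel

lemma chkD9 : chkD 9 = true := by decide +kernel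

lemma chk2 : chk 0 (cart tabA2) (cart tabB2) = true := by decide +kernel

lemma chk6 : chk 4 (cart tabA6) (cart tabB6) = true := by decide +kernel

lemma chk8 : chk 6 (cart tabA8) (fun _ => []) = true := by decide +kernel

section slthree
variable (k : Type*) [Field k] [CharP k 3]

/-- Coordinates of `sl₃` in characteristic 3. -/
noncomputable def slEquiv : sl3 k ≃ₗ[k] (Fin 8 → k) where
  toFun x := ![x.1 0 1, x.1 1 2, x.1 0 2, x.1 1 0, x.1 2 1, x.1 2 0, x.1 0 0 - x.1 2 2, x.1 2 2]
  invFun c := ⟨!![c 6 + c 7, c 0, c 2; c 3, c 7 - c 6, c 1; c 5, c 4, c 7], by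
    have h3 : (3 : k) = 0 := by exact_mod_cast CharP.cast_eq_zero k 3
    change Matrix.trace (!![c 6 + c 7, c 0, c 2; c 3, c 7 - c 6, c 1; c 5, c 4, c 7] :
      Matrix (Fin 3) (Fin 3) k) = 0
    simp [Matrix.trace, Fin.sum_univ_three]
    linear_combination (c 7) * h3⟩
  map_add' x y := by
    ext i; fin_cases i <;> simp
    ring
  map_smul' a x := by
    ext i; fin_cases i <;> simp
    ring
  left_inv x := by
    have h3 : (3 : k) = 0 := by exact_mod_cast CharP.cast_eq_zero k 3
    have hx : x.1 0 0 + x.1 1 1 + x.1 2 2 = 0 := by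
      have : Matrix.trace x.1 = 0 := x.2
      simpa [Matrix.trace, Fin.sum_univ_three] using this
    ext i j
    fin_cases i <;> fin_cases j <;> simp
    linear_combination x.1 2 2 * h3 - hx
  right_inv c := by
    ext i; fin_cases i <;> simp

/-- Basis of `sl₃`. -/
noncomputable def slB : Module.Basis (Fin 8) k (sl3 k) := Module.Basis.ofEquivFun (slEquiv k)

lemma slB_coe (i : Fin 8) : ((slB k i).1 : Matrix (Fin 3) (Fin 3) k) =
    ![!![0, 1, 0; 0, 0, 0; 0, 0, 0], !![0, 0, 0; 0, 0, 1; 0, 0, 0], !![0, 0, 1; 0, 0, 0; 0, 0, 0],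
      !![0, 0, 0; 1, 0, 0; 0, 0, 0], !![0, 0, 0; 0, 0, 0; 0, 1, 0], !![0, 0, 0; 0, 0, 0; 1, 0, 0],
      !![1, 0, 0; 0, -1, 0; 0, 0, 0], !![1, 0, 0; 0, 1, 0; 0, 0, 1]] i := by
  rw [slB, Module.Basis.coe_ofEquivFun]
  fin_cases i <;> (ext a b; fin_cases a <;> fin_cases b <;> simp [slEquiv])

/-- The basis matrices over the prime field. -/
def matA : List (Matrix (Fin 3) (Fin 3) (ZMod 3)) :=
  [!![0, 1, 0; 0, 0, 0; 0, 0, 0], !![0, 0, 0; 0, 0, 1; 0, 0, 0], !![0, 0, 1; 0, 0, 0; 0, 0, 0],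
    !![0, 0, 0; 1, 0, 0; 0, 0, 0], !![0, 0, 0; 0, 0, 0; 0, 1, 0], !![0, 0, 0; 0, 0, 0; 1, 0, 0],
    !![1, 0, 0; 0, -1, 0; 0, 0, 0], !![1, 0, 0; 0, 1, 0; 0, 0, 1]]

/-- Base change from the prime field. -/
noncomputable def bch : Matrix (Fin 3) (Fin 3) (ZMod 3) →+* Matrix (Fin 3) (Fin 3) k :=
  (ZMod.castHom (dvd_refl 3) k).mapMatrix

lemma bb_coe (i : ℕ) : (bb (slB k) i).1 = bch k (matA.getD i 0) := by
  by_cases h : i < 8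
  · rw [bb, dif_pos h, slB_coe]
    interval_cases i <;>
    · simp only [matA, List.getD_cons_zero, List.getD_cons_succ]
      ext a b
      fin_cases a <;> fin_cases b <;> simp [bch]
  · rw [bb, dif_neg h, List.getD_eq_default _ _ (by simpa [matA] using h), map_zero]
    rfl

lemma sum_coe (L : LC) : ((L.map fun pc => (pc.2 : k) • bb (slB k) pc.1).sum).1 =
    bch k (L.map fun pc => pc.2 • matA.getD pc.1 0).sum := by
  induction L with
  | nil => simp
  | cons t L ih =>
    rw [List.map_cons, List.sum_cons, List.map_cons, List.sum_cons, map_add, ← ih, map_nsmul,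
      ← bb_coe, Nat.cast_smul_eq_nsmul]
    rfl

lemma matA_bracket : ∀ i < 8, ∀ j < 8, matA.getD i 0 * matA.getD j 0 -
    matA.getD j 0 * matA.getD i 0 = ((sc i j).map fun pc => pc.2 • matA.getD pc.1 0).sum := by
  decide +kernel

lemma sl_bracket' : ∀ i < 8, ∀ j < 8, ⁅bb (slB k) i, bb (slB k) j⁆ =
    ((sc i j).map fun pc => (pc.2 : k) • bb (slB k) pc.1).sum := by
  intro i hi j hj
  apply Subtype.ext
  rw [LieAlgebra.SpecialLinear.sl_bracket, sum_coe, bb_coe, bb_coe, ← matA_bracket i hi j hj,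
    map_sub, map_mul, map_mul]

lemma mem_center (x : sl3 k) : x ∈ LieAlgebra.center k (sl3 k) ↔
    ∀ i : Fin 7, slEquiv k x i.castSucc = 0 := by
  have h3 : (3 : k) = 0 := by exact_mod_cast CharP.cast_eq_zero k 3
  rw [LieAlgebra.center, LieModule.mem_maxTrivSubmodule]
  constructor
  · intro h
    have H : ∀ (i : Fin 8) (a c : Fin 3),
        ((slB k i).1 * x.1 - x.1 * (slB k i).1) a c = 0 := by
      intro i a c
      rw [← LieAlgebra.SpecialLinear.sl_bracket, h]; rfl
    have h12 := H 0 0 2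
    have h10 := H 0 0 0
    have h20 := H 0 2 1
    have h01 := H 0 0 1
    have h21 := H 1 1 1
    have h22 := H 1 1 2
    have h02 := H 1 0 2
    have h00 := H 5 2 2
    simp only [slB_coe, Matrix.sub_apply, Matrix.mul_apply, Fin.sum_univ_three]
      at h12 h10 h20 h01 h21 h22 h02 h00
    simp at h12 h10 h20 h01 h21 h22 h02 h00
    intro i
    fin_cases i <;> simp [slEquiv, *]
    linear_combination -h22 - h01
  · intro h y
    have h0 := h 0
    have h1 := h 1
    have h2 := h 2
    have h4 := h 3
    have h5 := h 4
    have h6 := h 5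
    have h7 := h 6
    have hx : x.1 0 0 + x.1 1 1 + x.1 2 2 = 0 := by
      have : Matrix.trace x.1 = 0 := x.2
      simpa [Matrix.trace, Fin.sum_univ_three] using this
    simp [slEquiv] at h0 h1 h2 h4 h5 h6 h7
    have h8 : x.1 0 0 = x.1 2 2 := by linear_combination h7
    have h9 : x.1 1 1 = x.1 2 2 := by linear_combination hx - h7 - x.1 2 2 * h3
    have hm : x.1 = x.1 2 2 • (1 : Matrix (Fin 3) (Fin 3) k) := by
      ext a c
      fin_cases a <;> fin_cases c <;> simp [*]
    apply Subtype.ext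
    rw [LieAlgebra.SpecialLinear.sl_bracket, hm]
    simp

/-- The coordinates of the quotient module, as a linear map. -/
noncomputable def quoMap : sl3ModCenter k →ₗ[k] (Fin 7 → k) :=
  Submodule.liftQ (LieAlgebra.center k (sl3 k)).toSubmodule
    (LinearMap.funLeft k k (Fin.castSucc : Fin 7 → Fin 8) ∘ₗ (slEquiv k).toLinearMap) (by
      intro x hx
      rw [LinearMap.mem_ker]
      ext i
      exact (mem_center k x).mp hx i)

lemma quoMap_mk (x : sl3 k) (i : Fin 7) :
    quoMap k (LieSubmodule.Quotient.mk x) i = slEquiv k x i.castSucc := rfl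

/-- The coordinates of the quotient module. -/
noncomputable def quoEquiv : sl3ModCenter k ≃ₗ[k] (Fin 7 → k) :=
  LinearEquiv.ofBijective (quoMap k) (by
    constructor
    · rw [injective_iff_map_eq_zero]
      intro y
      obtain ⟨x, rfl⟩ := LieSubmodule.Quotient.surjective_mk' _ y
      intro h
      refine (LieSubmodule.Quotient.mk_eq_zero' (N := LieAlgebra.center k (sl3 k))).mpr ?_
      rw [mem_center]
      intro i
      exact congrFun h i
    · intro c
      refine ⟨LieSubmodule.Quotient.mk ((slEquiv k).symm (Fin.snoc c 0)), ?_⟩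
      ext i
      rw [quoMap_mk, LinearEquiv.apply_symm_apply, Fin.snoc_castSucc])

/-- Basis of the quotient module. -/
noncomputable def quoB : Module.Basis (Fin 7) k (sl3ModCenter k) :=
  Module.Basis.ofEquivFun (quoEquiv k)

lemma mc_quoB (l : ℕ) (hl : l < 7) (x : sl3 k) :
    mc (quoB k) l (LieSubmodule.Quotient.mk x) = slEquiv k x ⟨l, by omega⟩ := by
  rw [mc, dif_pos hl]
  simp only [quoB, Module.Basis.coord_apply, Module.Basis.ofEquivFun_repr_apply]
  rfl

set_option maxHeartbeats 8000000 in
lemma sl_action : ∀ i < 8, ∀ l < 7, ∀ y : sl3ModCenter k,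
    mc (quoB k) l ⁅bb (slB k) i, y⁆ =
      ((ac i l).map fun qc => (qc.2 : k) * mc (quoB k) qc.1 y).sum := by
  have h3 : (3 : k) = 0 := by exact_mod_cast CharP.cast_eq_zero k 3
  have h2 : (2 : k) = -1 := by linear_combination h3
  intro i hi l hl y
  obtain ⟨x, rfl⟩ := LieSubmodule.Quotient.surjective_mk' _ y
  obtain ⟨c, rfl⟩ := (slEquiv k).symm.surjective x
  have e : ⁅bb (slB k) i, LieSubmodule.Quotient.mk' (LieAlgebra.center k (sl3 k)) ((slEquiv k).symm c)⁆ =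
    LieSubmodule.Quotient.mk (N := LieAlgebra.center k (sl3 k)) ⁅bb (slB k) i, (slEquiv k).symm c⁆ := rfl
  have e' : LieSubmodule.Quotient.mk' (LieAlgebra.center k (sl3 k)) ((slEquiv k).symm c) =
    LieSubmodule.Quotient.mk (N := LieAlgebra.center k (sl3 k)) ((slEquiv k).symm c) := rfl
  have hE : ∀ z : sl3 k, slEquiv k z = ![z.1 0 1, z.1 1 2, z.1 0 2, z.1 1 0, z.1 2 1, z.1 2 0,
    z.1 0 0 - z.1 2 2, z.1 2 2] := fun z => rfl
  have hS : ((slEquiv k).symm c).1 = !![c 6 + c 7, c 0, c 2; c 3, c 7 - c 6, c 1; c 5, c 4, c 7] := rfl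
  rw [e, e', mc_quoB k l hl, hE, LieAlgebra.SpecialLinear.sl_bracket, hS]
  interval_cases i <;>
  · simp only [bb, Nat.reduceLT, dite_true, slB_coe]
    interval_cases l <;> simp [ac, acT, mc_quoB, h2] <;>
      first
      | done
      | ring1
      | linear_combination (c 0) * h3
      | linear_combination (-c 0) * h3
      | linear_combination (c 1) * h3
      | linear_combination (-c 1) * h3
      | linear_combination (c 2) * h3
      | linear_combination (-c 2) * h3
      | linear_combination (c 3) * h3
      | linear_combination (-c 3) * h3
      | linear_combination (c 4) * h3
      | linear_combination (-c 4) * h3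
      | linear_combination (c 5) * h3
      | linear_combination (-c 5) * h3
      | linear_combination (c 6) * h3
      | linear_combination (-c 6) * h3

end slthree

/-- Vanishing of cohomology when every cocycle is a coboundary. -/
lemma ceH_subsingleton {k : Type*} [Field k] {g : Type*} [LieRing g] [LieAlgebra k g]
    {M : Type*} [AddCommGroup M] [Module k M] [LieRingModule g M] [LieModule k g M] (n : ℕ)
    (h : ∀ ψ : g [⋀^Fin (n + 1)]→ₗ[k] M, (∀ v, ceD k g M ψ v = 0) →
      ∃ φ : g [⋀^Fin n]→ₗ[k] M, ∀ v, ψ v = ceD k g M φ v) :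
    Subsingleton (ceH k g M (n + 1)) := by
  refine Submodule.Quotient.subsingleton_iff.mpr (eq_top_iff.mpr ?_)
  rintro ⟨ψ, hψ⟩ -
  exact h ψ hψ

end SlThree

theorem H2_H6_H8_quotient_module_vanish (k : Type*) [Field k] [IsAlgClosed k] [CharP k 3] :
    Subsingleton (ceH k (sl3 k) (sl3ModCenter k) 2) ∧
      Subsingleton (ceH k (sl3 k) (sl3ModCenter k) 6) ∧
        Subsingleton (ceH k (sl3 k) (sl3ModCenter k) 8) := by
  refine ⟨SlThree.ceH_subsingleton 1 fun ψ hψ => ?_, SlThree.ceH_subsingleton 5 fun ψ hψ => ?_,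
    SlThree.ceH_subsingleton 7 fun ψ hψ => ?_⟩
  · exact SlThree.exact_of_chk (SlThree.slB k) (SlThree.quoB k) (SlThree.sl_bracket' k)
      (SlThree.sl_action k) 0 _ _ SlThree.chkD2 SlThree.chkD3 SlThree.chk2 ψ hψ
  · exact SlThree.exact_of_chk (SlThree.slB k) (SlThree.quoB k) (SlThree.sl_bracket' k)
      (SlThree.sl_action k) 4 _ _ SlThree.chkD6 SlThree.chkD7 SlThree.chk6 ψ hψ
  · exact SlThree.exact_of_chk (SlThree.slB k) (SlThree.quoB k) (SlThree.sl_bracket' k)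
      (SlThree.sl_action k) 6 _ _ SlThree.chkD8 SlThree.chkD9 SlThree.chk8 ψ hψ
end
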